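/- Let F : [0,∞) → [0,∞) be a non-zero function. The following are equivalent: (1) F∘f is a TN function for every TN function f that is non-zero at two or more points; (2) F∘Λ is a TN function for every Pólya frequency function Λ; (3) there exists c > 0 such that F(x) = c for all x, or F(x) = c·x for all x, or F(x) = c·1_{x>0}, or F(x) = c·1_{x=0}. Moreover, F∘f is a TN function for every TN function f if and only if F(x) = c, F(x) = c·x, or F(x) = c·1_{x>0} for some c > 0. -/

import Mathlib

/-- A kernel on linearly ordered sets is totally non-negative if all matrices
obtained by evaluating it on increasing tuples have non-negative determinant. -/
def IsTNKernel {X Y : Type*} [LinearOrder X] [LinearOrder Y] (K : X → Y → ℝ) : Prop :=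
  ∀ (n : ℕ) (x : Fin n → X) (y : Fin n → Y), StrictMono x → StrictMono y →
    0 ≤ (Matrix.of fun i j : Fin n => K (x i) (y j)).det

/-- A TN function: a Lebesgue-measurable function whose associated Toeplitz
kernel is totally non-negative. -/
def IsTNFun (f : ℝ → ℝ) : Prop :=
  Measurable f ∧ IsTNKernel fun x y : ℝ => f (x - y)

/-- A Pólya frequency function: an integrable TN function taking values in
`[0,∞)` that is non-zero at two or more points. -/
def IsPolyaFrequencyFunction (Λ : ℝ → ℝ) : Prop :=
  MeasureTheory.Integrable Λ ∧ (∀ x, 0 ≤ Λ x) ∧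
  (∃ a b : ℝ, a ≠ b ∧ Λ a ≠ 0 ∧ Λ b ≠ 0) ∧
  IsTNKernel fun x y : ℝ => Λ (x - y)

/-!
Let `F` preserve Pólya frequency functions. A totally non-negative function vanishing outside a
bounded interval is non-zero in at most one point: its consecutive Toeplitz minors on a grid of
mesh `h` satisfy a discrete Toda equation, and comparing them with the minors of `r ↦ 1 / r!` bounds
the log-concavity of the function from below by a multiple of `1 / h`. Applied to `F` composed with
`c * exp (-|x|)`, this shows that `F` vanishes either everywhere or nowhere on `(0, ∞)`; in the
latter case log-concavity makes `F` monotone there.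

Composing `F` with `c * exp (-x)` on `[0, ∞)` gives `F` constant if `F 0 ≠ 0`. If `F 0 = 0`, the
`3 × 3` minors with one zero entry force `s ↦ F (exp s)` to be multiplicative, that is,
`F x = c * x ^ α` on `(0, ∞)`. For `α > 0`, the leading term at `w = exp (-x) → 0` of the minors of
`(1 - w) ^ α` (size 3) and of `((1 - w) ^ 2 * (1 + 2 * w)) ^ α` (size 4), which come from Pólya
frequency functions up to a power of `w`, has the sign of `α - 1` and of `1 - α`, respectively.

Conversely, a totally non-negative function non-zero at two points has an upper or lower set as
support, and indicators of such sets and of their complements are totally non-negative.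
-/

open MeasureTheory Set Filter Topology

/-! ### Totally non-negative kernels -/

lemma det_eq_of_last_column_eq_zero {R : Type*} [CommRing R] {n : ℕ}
    (A : Matrix (Fin (n + 1)) (Fin (n + 1)) R) (h : ∀ i : Fin n, A i.castSucc (Fin.last n) = 0) :
    A.det = A (Fin.last n) (Fin.last n) * (A.submatrix Fin.castSucc Fin.castSucc).det := by
  simp [Matrix.det_succ_column A (Fin.last n), Fin.sum_univ_castSucc, h]

lemma det_eq_of_last_row_eq_zero {R : Type*} [CommRing R] {n : ℕ}
    (A : Matrix (Fin (n + 1)) (Fin (n + 1)) R) (h : ∀ j : Fin n, A (Fin.last n) j.castSucc = 0) :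
    A.det = A (Fin.last n) (Fin.last n) * (A.submatrix Fin.castSucc Fin.castSucc).det := by
  simp [Matrix.det_succ_row A (Fin.last n), Fin.sum_univ_castSucc, h]

namespace IsTNKernel

variable {X Y T : Type*} [LinearOrder X] [LinearOrder Y] [LinearOrder T] {K : X → Y → ℝ}

lemma nonneg (hK : IsTNKernel K) (x : X) (y : Y) : 0 ≤ K x y := by
  simpa using hK 1 (fun _ => x) (fun _ => y) (Subsingleton.strictMono _) (Subsingleton.strictMono _)

lemma mul_le_mul (hK : IsTNKernel K) {x₀ x₁ : X} {y₀ y₁ : Y} (hx : x₀ < x₁) (hy : y₀ < y₁) :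
    K x₀ y₁ * K x₁ y₀ ≤ K x₀ y₀ * K x₁ y₁ := by
  have h := hK 2 ![x₀, x₁] ![y₀, y₁] (by simpa) (by simpa)
  simpa [Matrix.det_fin_two] using h

lemma minor_three_nonneg (hK : IsTNKernel K) {x₀ x₁ x₂ : X} {y₀ y₁ y₂ : Y}
    (hx₁ : x₀ < x₁) (hx₂ : x₁ < x₂) (hy₁ : y₀ < y₁) (hy₂ : y₁ < y₂) :
    0 ≤ K x₀ y₀ * K x₁ y₁ * K x₂ y₂ - K x₀ y₀ * K x₁ y₂ * K x₂ y₁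
      - K x₀ y₁ * K x₁ y₀ * K x₂ y₂ + K x₀ y₁ * K x₁ y₂ * K x₂ y₀
      + K x₀ y₂ * K x₁ y₀ * K x₂ y₁ - K x₀ y₂ * K x₁ y₁ * K x₂ y₀ := by
  have h := hK 3 ![x₀, x₁, x₂] ![y₀, y₁, y₂] (by simp [*]) (by simp [*])
  simpa [Matrix.det_fin_three] using h

lemma transpose (hK : IsTNKernel K) : IsTNKernel fun y x => K x y := fun n y x hy hx => by
  rw [← Matrix.det_transpose]
  exact hK n x y hx hy

lemma comp_strictMono {X' Y' : Type*} [LinearOrder X'] [LinearOrder Y'] (hK : IsTNKernel K)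
    {u : X' → X} {v : Y' → Y} (hu : StrictMono u) (hv : StrictMono v) :
    IsTNKernel fun x y => K (u x) (v y) :=
  fun n x y hx hy => hK n (u ∘ x) (v ∘ y) (hu.comp hx) (hv.comp hy)

lemma mul_left_right (hK : IsTNKernel K) {α : X → ℝ} {β : Y → ℝ} (hα : ∀ x, 0 ≤ α x)
    (hβ : ∀ y, 0 ≤ β y) : IsTNKernel fun x y => α x * (β y * K x y) := by
  intro n x y hx hy
  have hrows := Matrix.det_mul_column (fun i => α (x i))
    (Matrix.of fun i j : Fin n => β (y j) * K (x i) (y j))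
  have hcols := Matrix.det_mul_row (fun j => β (y j)) (Matrix.of fun i j : Fin n => K (x i) (y j))
  simp only [Matrix.of_apply] at hrows hcols
  rw [hrows, hcols]
  exact mul_nonneg (Finset.prod_nonneg fun i _ => hα _)
    (mul_nonneg (Finset.prod_nonneg fun j _ => hβ _) (hK n x y hx hy))

lemma const_mul (hK : IsTNKernel K) {c : ℝ} (hc : 0 ≤ c) : IsTNKernel fun x y => c * K x y := by
  simpa using hK.mul_left_right (α := fun _ => c) (β := fun _ => 1)
    (fun _ => hc) fun _ => zero_le_one

/-- If some earlier row meets the last column, it coincides with the last row; otherwise the last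
column vanishes above the corner. -/
lemma indicator_of_monotone {s : X → Set Y} (hs : Monotone s) (hlow : ∀ x, IsLowerSet (s x)) :
    IsTNKernel fun x y => (s x).indicator 1 y := by
  intro n
  induction n with
  | zero => simp
  | succ n ih =>
    intro x y hx hy
    by_cases h : ∃ i : Fin n, y (Fin.last n) ∈ s (x i.castSucc)
    · obtain ⟨i, hi⟩ := h
      have hrow (j) : y j ∈ s (x i.castSucc) := hlow _ (hy.monotone (Fin.le_last j)) hi
      have hlast (j) : y j ∈ s (x (Fin.last n)) := hs (hx.monotone (Fin.le_last _)) (hrow j)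
      exact (Matrix.det_zero_of_row_eq (Fin.castSucc_lt_last i).ne
        (funext fun j => by simp [hrow j, hlast j])).ge
    · push Not at h
      rw [det_eq_of_last_column_eq_zero _ fun i => indicator_of_notMem (h i) _]
      exact mul_nonneg (indicator_nonneg (fun _ _ => zero_le_one) _)
        (ih (x ∘ Fin.castSucc) (y ∘ Fin.castSucc) (hx.comp Fin.strictMono_castSucc)
          (hy.comp Fin.strictMono_castSucc))

lemma indicator_singleton : IsTNKernel fun x y : X => ({x} : Set X).indicator 1 y := by
  intro n
  induction n with
  | zero => simp
  | succ n ih =>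
    intro x y hx hy
    have hminor := ih (x ∘ Fin.castSucc) (y ∘ Fin.castSucc) (hx.comp Fin.strictMono_castSucc)
      (hy.comp Fin.strictMono_castSucc)
    have hcorner : 0 ≤ ({x (Fin.last n)} : Set X).indicator (1 : X → ℝ) (y (Fin.last n)) :=
      indicator_nonneg (fun _ _ => zero_le_one) _
    rcases le_total (x (Fin.last n)) (y (Fin.last n)) with h | h
    · have hcol (i : Fin n) : y (Fin.last n) ∉ ({x i.castSucc} : Set X) :=
        ((hx (Fin.castSucc_lt_last i)).trans_le h).ne'
      rw [det_eq_of_last_column_eq_zero _ fun i => indicator_of_notMem (hcol i) _]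
      exact mul_nonneg hcorner hminor
    · have hrow (j : Fin n) : y j.castSucc ∉ ({x (Fin.last n)} : Set X) :=
        ((hy (Fin.castSucc_lt_last j)).trans_le h).ne
      rw [det_eq_of_last_row_eq_zero _ fun j => indicator_of_notMem (hrow j) _]
      exact mul_nonneg hcorner hminor

lemma det_mul_det_nonneg {L : X → T → ℝ} {M : T → Y → ℝ} (hL : IsTNKernel L) (hM : IsTNKernel M)
    {n : ℕ} {x : Fin n → X} {y : Fin n → Y} (hx : StrictMono x) (hy : StrictMono y)
    (t : Fin n → T) :
    0 ≤ (Matrix.of fun i j => L (x i) (t j)).det * (Matrix.of fun i j => M (t i) (y j)).det := by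
  by_cases ht : Function.Injective t
  · set σ := Tuple.sort t
    have hσ : StrictMono (t ∘ σ) :=
      (Tuple.monotone_sort t).strictMono_of_injective (ht.comp σ.injective)
    have hLσ := (Matrix.det_permute' σ (Matrix.of fun i j => L (x i) (t j))).symm.trans_ge
      (hL n x _ hx hσ)
    have hMσ := (Matrix.det_permute σ (Matrix.of fun i j => M (t i) (y j))).symm.trans_ge
      (hM n _ y hσ hy)
    rcases Int.units_eq_one_or (Equiv.Perm.sign σ) with h | h <;>
      simp only [h, Units.val_one, Units.val_neg, Int.cast_one, Int.cast_neg, one_mul, neg_mul,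
        Left.nonneg_neg_iff] at hLσ hMσ
    · exact mul_nonneg hLσ hMσ
    · exact mul_nonneg_of_nonpos_of_nonpos hLσ hMσ
  · obtain ⟨i, j, hij, hne⟩ := Function.not_injective_iff.1 ht
    rw [Matrix.det_zero_of_column_eq hne fun k => by simp [hij], zero_mul]

end IsTNKernel

section Andreief

lemma det_mul_det_eq_sum {R : Type*} [CommRing R] {n : ℕ} (A B : Matrix (Fin n) (Fin n) R) :
    A.det * B.det = ∑ τ : Equiv.Perm (Fin n), ∑ σ : Equiv.Perm (Fin n),
      ((τ.sign : ℤ) : R) * (((σ.sign : ℤ) : R) * ∏ k, A (σ k) k * B k (τ k)) := by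
  rw [← B.det_transpose, Matrix.det_apply', Matrix.det_apply', Finset.sum_mul_sum, Finset.sum_comm]
  simp only [Matrix.transpose_apply, Finset.prod_mul_distrib]
  exact Finset.sum_congr rfl fun τ _ => Finset.sum_congr rfl fun σ _ => by ring

lemma sign_mul_sum_sign_mul_prod {R : Type*} [CommRing R] {n : ℕ} (C : Matrix (Fin n) (Fin n) R)
    (τ : Equiv.Perm (Fin n)) :
    ((τ.sign : ℤ) : R) * ∑ σ : Equiv.Perm (Fin n), ((σ.sign : ℤ) : R) * ∏ k, C (σ k) (τ k) =
      C.det := by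
  have h := Matrix.det_permute' τ C
  rw [Matrix.det_apply'] at h
  simp only [Matrix.submatrix_apply, id_eq] at h
  rw [h, ← mul_assoc, ← Int.cast_mul, Int.units_coe_mul_self, Int.cast_one, one_mul]

variable {T : Type*} [MeasurableSpace T] {μ : Measure T} [SigmaFinite μ]

/-- Andréief's identity. -/
lemma factorial_mul_det_integral_mul {n : ℕ} {φ ψ : Fin n → T → ℝ}
    (hint : ∀ i j, Integrable (fun t => φ i t * ψ j t) μ) :
    (n.factorial : ℝ) * (Matrix.of fun i j => ∫ t, φ i t * ψ j t ∂μ).det =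
      ∫ t, (Matrix.of fun i j => φ i (t j)).det * (Matrix.of fun i j => ψ j (t i)).det
        ∂Measure.pi fun _ => μ := by
  have hprod (σ τ : Equiv.Perm (Fin n)) : Integrable
      (fun t : Fin n → T => ∏ k, φ (σ k) (t k) * ψ (τ k) (t k)) (Measure.pi fun _ => μ) :=
    Integrable.fintype_prod fun k => hint (σ k) (τ k)
  have hterm (τ : Equiv.Perm (Fin n)) : ∫ t, ∑ σ : Equiv.Perm (Fin n), ((τ.sign : ℤ) : ℝ) *
      (((σ.sign : ℤ) : ℝ) * ∏ k, φ (σ k) (t k) * ψ (τ k) (t k)) ∂(Measure.pi fun _ => μ) =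
      (Matrix.of fun i j => ∫ t, φ i t * ψ j t ∂μ).det := by
    rw [integral_finsetSum _ fun σ _ => ((hprod σ τ).const_mul _).const_mul _,
      ← sign_mul_sum_sign_mul_prod _ τ, Finset.mul_sum]
    refine Finset.sum_congr rfl fun σ _ => ?_
    rw [integral_const_mul, integral_const_mul]
    exact congrArg _ (congrArg _ (integral_fintype_prod_eq_prod fun k s => φ (σ k) s * ψ (τ k) s))
  simp only [det_mul_det_eq_sum, Matrix.of_apply]
  rw [integral_finsetSum _ fun τ _ => integrable_finsetSum _ fun σ _ =>
    ((hprod σ τ).const_mul _).const_mul _]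
  simp [hterm, Fintype.card_perm]

lemma IsTNKernel.integral_mul {X Y : Type*} [LinearOrder X] [LinearOrder Y] [LinearOrder T]
    {L : X → T → ℝ} {M : T → Y → ℝ} (hL : IsTNKernel L) (hM : IsTNKernel M)
    (hint : ∀ x y, Integrable (fun t => L x t * M t y) μ) :
    IsTNKernel fun x y => ∫ t, L x t * M t y ∂μ := by
  intro n x y hx hy
  have hfact : (0 : ℝ) < n.factorial := by exact_mod_cast n.factorial_pos
  refine nonneg_of_mul_nonneg_right ?_ hfact
  rw [factorial_mul_det_integral_mul (φ := fun i => L (x i)) (ψ := fun j t => M t (y j))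
    fun i j => hint (x i) (y j)]
  exact integral_nonneg fun t => hL.det_mul_det_nonneg hM hx hy t

end Andreief

/-! ### Toeplitz kernels -/

/-- Total non-negativity of the Toeplitz kernel `(x, y) ↦ f (x - y)`: the condition that `IsTNFun`
adds to measurability, over an arbitrary index group (`ℝ` for functions, `ℤ` for sequences). -/
def IsTNToeplitz {G : Type*} [Sub G] [LinearOrder G] (f : G → ℝ) : Prop :=
  IsTNKernel fun x y : G => f (x - y)

lemma indicator_Ici_mul_indicator_Ici (a b : ℝ → ℝ) (x y : ℝ) :
    (fun t => (Ici 0).indicator a (x - t) * (Ici 0).indicator b (t - y)) =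
      (Icc y x).indicator fun t => a (x - t) * b (t - y) := by
  ext t
  by_cases hx : t ≤ x <;> by_cases hy : y ≤ t <;> simp [hx, hy]

namespace IsTNToeplitz

section Group

variable {G : Type*} [AddCommGroup G] [LinearOrder G] {f : G → ℝ}

lemma nonneg (hf : IsTNToeplitz f) (u : G) : 0 ≤ f u := by
  simpa using IsTNKernel.nonneg hf u 0

lemma pos_of_ne_zero (hf : IsTNToeplitz f) {u : G} (hu : f u ≠ 0) : 0 < f u :=
  (hf.nonneg u).lt_of_ne' hu

lemma const_mul (hf : IsTNToeplitz f) {c : ℝ} (hc : 0 ≤ c) : IsTNToeplitz fun x => c * f x :=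
  IsTNKernel.const_mul hf hc

lemma indicator_zero : IsTNToeplitz (({0} : Set G).indicator 1) := by
  unfold IsTNToeplitz
  convert IsTNKernel.indicator_singleton (X := G) using 3 with x y
  simp [indicator_apply, sub_eq_zero, eq_comm]

lemma comp_neg (hf : IsTNToeplitz f) : IsTNToeplitz fun x => f (-x) := by
  simpa [IsTNToeplitz] using IsTNKernel.transpose hf

variable [IsOrderedAddMonoid G]

lemma mul_le_mul (hf : IsTNToeplitz f) {u v v' w : G} (hv : u < v) (hv' : u < v')
    (h : v + v' = u + w) : f u * f w ≤ f v * f v' := by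
  have hw : v' - u + v = w := by rw [sub_add_eq_add_sub, add_comm v' v, h, add_sub_cancel_left]
  simpa [hw] using IsTNKernel.mul_le_mul hf (sub_pos.2 hv') (neg_lt_neg hv)

lemma ordConnected_support (hf : IsTNToeplitz f) : (Function.support f).OrdConnected := by
  refine ⟨fun u hu w hw v hv => ?_⟩
  rcases hv.1.eq_or_lt with rfl | huv
  · exact hu
  rcases hv.2.eq_or_lt with rfl | hvw
  · exact hw
  have h := hf.mul_le_mul huv (lt_sub_iff_add_lt.2 (add_lt_add_right hvw u))
    (add_sub_cancel v (u + w))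
  exact left_ne_zero_of_mul ((mul_pos (hf.pos_of_ne_zero hu) (hf.pos_of_ne_zero hw)).trans_le h).ne'

lemma indicator_of_isUpperSet {A : Set G} (hA : IsUpperSet A) : IsTNToeplitz (A.indicator 1) :=
  IsTNKernel.indicator_of_monotone (s := fun x => {y | x - y ∈ A})
    (fun _ _ h _ hy => hA (sub_le_sub_right h _) hy) fun _ _ _ h hy => hA (sub_le_sub_left h _) hy

lemma indicator_of_isLowerSet {A : Set G} (hA : IsLowerSet A) : IsTNToeplitz (A.indicator 1) := by
  convert (indicator_of_isUpperSet hA.neg).comp_neg using 2 with x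
  by_cases hx : x ∈ A
  · simp [hx]
  · rw [indicator_of_notMem hx, indicator_of_notMem]
    rwa [Set.neg_mem_neg]

end Group

variable {f : ℝ → ℝ}

lemma exp_mul (hf : IsTNToeplitz f) (l : ℝ) : IsTNToeplitz fun x => Real.exp (l * x) * f x := by
  change IsTNKernel fun x y => Real.exp (l * (x - y)) * f (x - y)
  convert IsTNKernel.mul_left_right hf (α := fun x => Real.exp (l * x))
    (β := fun y => Real.exp (-(l * y))) (fun _ => (Real.exp_pos _).le) fun _ => (Real.exp_pos _).le
    using 3 with x y
  rw [← mul_assoc, ← Real.exp_add, mul_sub, sub_eq_add_neg]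

lemma exp_Ici (l : ℝ) : IsTNToeplitz ((Ici 0).indicator fun x => Real.exp (l * x)) := by
  convert (indicator_of_isUpperSet (isUpperSet_Ici (0 : ℝ))).exp_mul l using 2 with x
  simp [indicator_apply]

/-- `c` is the convolution of `b` with the exponential `x ↦ exp (-l x)` on `[0, ∞)`. -/
lemma indicator_Ici_of_hasDerivAt {b c : ℝ → ℝ} {l : ℝ} (hb : IsTNToeplitz ((Ici 0).indicator b))
    (hbc : Continuous b) (hc : ∀ x, HasDerivAt c (b x - l * c x) x) (hc0 : c 0 = 0) :
    IsTNToeplitz ((Ici 0).indicator c) := by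
  have hcont (x y : ℝ) : Continuous fun t => Real.exp (-l * (x - t)) * b (t - y) := by fun_prop
  have hint (x y : ℝ) : Integrable fun t =>
      (Ici 0).indicator (fun x => Real.exp (-l * x)) (x - t) * (Ici 0).indicator b (t - y) := by
    rw [indicator_Ici_mul_indicator_Ici, integrable_indicator_iff measurableSet_Icc]
    exact (hcont x y).continuousOn.integrableOn_compact isCompact_Icc
  have hprim (x y t : ℝ) : HasDerivAt (fun t => Real.exp (-l * (x - t)) * c (t - y))
      (Real.exp (-l * (x - t)) * b (t - y)) t := by
    refine ((((hasDerivAt_id t).const_sub x).const_mul (-l)).exp.mul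
      ((hc (t - y)).comp_sub_const t y)).congr_deriv ?_
    simp only [id_eq]
    ring
  unfold IsTNToeplitz
  convert IsTNKernel.integral_mul (exp_Ici (-l)) hb hint using 3 with x y
  rw [indicator_Ici_mul_indicator_Ici, integral_indicator measurableSet_Icc]
  rcases le_or_gt y x with hyx | hxy
  · rw [integral_Icc_eq_integral_Ioc, ← intervalIntegral.integral_of_le hyx,
      intervalIntegral.integral_eq_sub_of_hasDerivAt (fun t _ => hprim x y t)
        ((hcont x y).intervalIntegrable _ _), indicator_of_mem (by simpa using hyx)]
    simp [hc0]
  · rw [Icc_eq_empty hxy.not_ge, indicator_of_notMem (by simpa using hxy)]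
    simp

/-- Composing the one-sided exponential kernel with its transpose gives half the two-sided one. -/
lemma exp_neg_abs : IsTNToeplitz fun x => Real.exp (-|x|) := by
  have hprod (x y : ℝ) : (fun t => (Ici 0).indicator (fun x => Real.exp (-1 * x)) (x - t) *
      (Ici 0).indicator (fun x => Real.exp (-1 * x)) (y - t)) =
      (Iic (min x y)).indicator fun t => Real.exp (-x - y) * Real.exp (2 * t) := by
    ext t
    by_cases hx : t ≤ x <;> by_cases hy : t ≤ y <;>
      simp only [indicator_apply, mem_Ici, mem_Iic, sub_nonneg, le_min_iff, hx, hy, if_true,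
        if_false, and_self, and_true, true_and, mul_zero, zero_mul, ← Real.exp_add]
    ring_nf
  have hK := IsTNKernel.integral_mul (μ := volume) (exp_Ici (-1))
    (IsTNKernel.transpose (exp_Ici (-1))) fun x y => by
      rw [hprod, integrable_indicator_iff measurableSet_Iic]
      exact (integrableOn_exp_mul_Iic (by norm_num) _).const_mul _
  change IsTNKernel fun x y => Real.exp (-|x - y|)
  convert hK.const_mul (c := 2) (by norm_num) using 3 with x y
  have habs : -|x - y| = -x - y + 2 * min x y := by
    rcases le_total x y with h | h
    · rw [min_eq_left h, abs_of_nonpos (sub_nonpos.2 h)]; ring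
    · rw [min_eq_right h, abs_of_nonneg (sub_nonneg.2 h)]; ring
  rw [hprod, integral_indicator measurableSet_Iic, integral_const_mul,
    integral_exp_mul_Iic (by norm_num), habs, Real.exp_add]
  ring

end IsTNToeplitz

/-! ### Pólya frequency functions -/

lemma IsTNToeplitz.isPolyaFrequencyFunction {Λ : ℝ → ℝ} (hΛ : IsTNToeplitz Λ)
    (hint : Integrable Λ) (hsupp : (Function.support Λ).Nontrivial) :
    IsPolyaFrequencyFunction Λ :=
  let ⟨a, ha, b, hb, hab⟩ := hsupp
  ⟨hint, hΛ.nonneg, ⟨a, b, hab, ha, hb⟩, hΛ⟩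

lemma integrable_exp_Ici {l : ℝ} (hl : 0 < l) :
    Integrable ((Ici 0).indicator fun x => Real.exp (-l * x)) := by
  rw [integrable_indicator_iff measurableSet_Ici, integrableOn_Ici_iff_integrableOn_Ioi]
  exact integrableOn_exp_mul_Ioi (neg_lt_zero.2 hl) 0

lemma nontrivial_support_indicator_Ici {a : ℝ → ℝ} (ha : ∀ x, 0 < x → 0 < a x) :
    (Function.support ((Ici 0).indicator a)).Nontrivial := by
  have hmem (x : ℝ) (hx : 0 < x) : x ∈ Function.support ((Ici 0).indicator a) := by
    simp [hx.le, (ha x hx).ne']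
  exact ⟨1, hmem 1 one_pos, 2, hmem 2 two_pos, by norm_num⟩

lemma hasDerivAt_exp_neg (x : ℝ) : HasDerivAt (fun x => Real.exp (-x)) (-Real.exp (-x)) x := by
  simpa using (hasDerivAt_neg x).exp

lemma exp_neg_pow (n : ℕ) (x : ℝ) : Real.exp (-x) ^ n = Real.exp (-n * x) := by
  rw [← Real.exp_nat_mul]; ring_nf

lemma exp_neg_lt_one {x : ℝ} (hx : 0 < x) : Real.exp (-x) < 1 :=
  Real.exp_lt_one_iff.2 (neg_neg_of_pos hx)

lemma integrable_exp_pow_Ici {n : ℕ} (hn : 0 < n) :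
    Integrable ((Ici 0).indicator fun x => Real.exp (-x) ^ n) := by
  simpa only [exp_neg_pow] using integrable_exp_Ici (l := n) (by exact_mod_cast hn)

namespace IsPolyaFrequencyFunction

variable {Λ : ℝ → ℝ}

lemma isTNToeplitz (hΛ : IsPolyaFrequencyFunction Λ) : IsTNToeplitz Λ := hΛ.2.2.2

lemma const_mul (hΛ : IsPolyaFrequencyFunction Λ) {c : ℝ} (hc : 0 < c) :
    IsPolyaFrequencyFunction fun x => c * Λ x :=
  let ⟨a, b, hab, ha, hb⟩ := hΛ.2.2.1
  (hΛ.isTNToeplitz.const_mul hc.le).isPolyaFrequencyFunction (hΛ.1.const_mul c)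
    ⟨a, mul_ne_zero hc.ne' ha, b, mul_ne_zero hc.ne' hb, hab⟩

lemma exp_Ici : IsPolyaFrequencyFunction ((Ici 0).indicator fun x => Real.exp (-x)) := by
  simpa using (IsTNToeplitz.exp_Ici (-1)).isPolyaFrequencyFunction (integrable_exp_Ici one_pos)
    (nontrivial_support_indicator_Ici fun x _ => Real.exp_pos _)

lemma exp_neg_abs : IsPolyaFrequencyFunction fun x => Real.exp (-|x|) := by
  refine IsTNToeplitz.exp_neg_abs.isPolyaFrequencyFunction ?_
    ⟨0, (Real.exp_pos _).ne', 1, (Real.exp_pos _).ne', zero_ne_one⟩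
  have hexp := integrable_exp_Ici one_pos
  refine (hexp.add hexp.comp_neg).mono' (by fun_prop) (Eventually.of_forall fun x => ?_)
  have hnonneg (x : ℝ) : 0 ≤ (Ici 0).indicator (fun x => Real.exp (-1 * x)) x :=
    indicator_nonneg (fun _ _ => (Real.exp_pos _).le) x
  rw [Real.norm_of_nonneg (Real.exp_pos _).le]
  rcases le_total 0 x with h | h
  · refine le_add_of_le_of_nonneg (le_of_eq ?_) (hnonneg _)
    simp [indicator_of_mem (mem_Ici.2 h), abs_of_nonneg h]
  · refine le_add_of_nonneg_of_le (hnonneg _) (le_of_eq ?_)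
    simp [indicator_of_mem (mem_Ici.2 (neg_nonneg.2 h)), abs_of_nonpos h]

lemma exp_pow_three_mul_Ici : IsPolyaFrequencyFunction
    ((Ici 0).indicator fun x => Real.exp (-x) ^ 3 * (1 - Real.exp (-x))) := by
  have hTN : IsTNToeplitz ((Ici 0).indicator fun x => Real.exp (-x) ^ 3) := by
    simpa only [exp_neg_pow] using IsTNToeplitz.exp_Ici (-(3 : ℕ))
  refine (hTN.indicator_Ici_of_hasDerivAt (l := 4) (by fun_prop) (fun x => ?_)
    (by simp)).isPolyaFrequencyFunction ?_ (nontrivial_support_indicator_Ici fun x hx => ?_)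
  · refine (((hasDerivAt_exp_neg x).fun_pow 3).mul
      ((hasDerivAt_exp_neg x).const_sub 1)).congr_deriv ?_
    simp only [Nat.cast_ofNat, Nat.add_one_sub_one]
    ring
  · have hint := (integrable_exp_pow_Ici three_pos).sub (integrable_exp_pow_Ici four_pos)
    rw [← indicator_sub'] at hint
    refine hint.congr (Eventually.of_forall fun x => congrFun (indicator_congr fun x _ => ?_) x)
    simp only [Pi.sub_apply]
    ring
  · have := sub_pos.2 (exp_neg_lt_one hx)
    positivity

/-- With `w = exp (-x)` the function is `w - 3 w ^ 3 + 2 w ^ 4`, so that dividing by `w` leaves no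
linear term in `w`. -/
lemma exp_mul_one_sub_sq_Ici : IsPolyaFrequencyFunction ((Ici 0).indicator fun x =>
    Real.exp (-x) * ((1 - Real.exp (-x)) ^ 2 * (1 + 2 * Real.exp (-x)))) := by
  have hpoly (x : ℝ) : Real.exp (-x) * ((1 - Real.exp (-x)) ^ 2 * (1 + 2 * Real.exp (-x))) =
      Real.exp (-x) ^ 1 - 3 * Real.exp (-x) ^ 3 + 2 * Real.exp (-x) ^ 4 := by ring
  have hderiv (x : ℝ) : HasDerivAt
      (fun x => (Real.exp (-x) ^ 1 - 3 * Real.exp (-x) ^ 3 + 2 * Real.exp (-x) ^ 4) / 6)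
      (Real.exp (-x) ^ 3 * (1 - Real.exp (-x)) -
        1 * ((Real.exp (-x) ^ 1 - 3 * Real.exp (-x) ^ 3 + 2 * Real.exp (-x) ^ 4) / 6)) x := by
    refine (((((hasDerivAt_exp_neg x).fun_pow 1).sub (((hasDerivAt_exp_neg x).fun_pow 3).const_mul
      3)).add (((hasDerivAt_exp_neg x).fun_pow 4).const_mul 2)).div_const 6).congr_deriv ?_
    simp only [Nat.cast_ofNat, Nat.add_one_sub_one, Nat.cast_one]
    ring
  have hTN := (exp_pow_three_mul_Ici.isTNToeplitz.indicator_Ici_of_hasDerivAt (by fun_prop) hderiv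
    (by norm_num)).const_mul (c := 6) (by norm_num)
  have hint := ((integrable_exp_pow_Ici one_pos).sub
    ((integrable_exp_pow_Ici three_pos).const_mul 3)).add
    ((integrable_exp_pow_Ici four_pos).const_mul 2)
  refine IsTNToeplitz.isPolyaFrequencyFunction ?_ (hint.congr (Eventually.of_forall fun x => ?_))
    (nontrivial_support_indicator_Ici fun x hx => ?_)
  · refine (congrArg IsTNToeplitz (funext fun x => ?_)).mpr hTN
    by_cases hx : 0 ≤ x
    · simp only [mem_Ici, hx, indicator_of_mem, hpoly]
      ring
    · simp [hx]
  · by_cases hx : 0 ≤ x <;> simp [hx, hpoly]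
  · have := sub_pos.2 (exp_neg_lt_one hx)
    positivity

end IsPolyaFrequencyFunction

lemma measurable_of_mul_le_mul_antitone {f Ψ : ℝ → ℝ} (hΨ : Antitone Ψ) (hΨ0 : ∀ x, 0 ≤ Ψ x)
    (hcross : ∀ ⦃x y⦄, x < y → f x * Ψ y ≤ f y * Ψ x)
    (hexc : {x | Ψ x = 0 ∧ f x ≠ 0}.Countable) : Measurable f := by
  set φ : ℝ → EReal := fun x => if 0 < Ψ x then ((f x / Ψ x : ℝ) : EReal) else ⊤ with hφ
  have hmono : Monotone φ := by
    intro x y hxy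
    rcases hxy.eq_or_lt with rfl | hxy
    · exact le_rfl
    by_cases hy : 0 < Ψ y
    · have hx := hy.trans_le (hΨ hxy.le)
      simpa only [hφ, hx, hy, if_true, EReal.coe_le_coe_iff] using
        (div_le_div_iff₀ hx hy).2 (hcross hxy)
    · simp only [hφ, hy, if_false, le_top]
  refine (hmono.measurable.ereal_toReal.mul hΨ.measurable).measurable_of_countable_ne
    (hexc.mono fun x hx => ?_)
  rcases (hΨ0 x).lt_or_eq with h | h
  · simp [hφ, h, h.ne'] at hx
  · simpa [← h, eq_comm] using hx

namespace IsPolyaFrequencyFunction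

variable {Λ : ℝ → ℝ}

lemma antitone_integral_Ioi (hΛ : IsPolyaFrequencyFunction Λ) :
    Antitone fun x => ∫ t in Ioi x, Λ t := fun _ _ hxy =>
  setIntegral_mono_set hΛ.1.integrableOn (Eventually.of_forall hΛ.2.1)
    (Ioi_subset_Ioi hxy).eventuallyLE

lemma mul_integral_Ioi_le (hΛ : IsPolyaFrequencyFunction Λ) {x y : ℝ} (hxy : x < y) :
    Λ x * ∫ t in Ioi y, Λ t ≤ Λ y * ∫ t in Ioi x, Λ t := by
  have htail (x : ℝ) : ∫ t in Ioi x, Λ t = ∫ t in Ioi 0, Λ (x + t) := by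
    simpa using ((measurePreserving_add_left volume x).setIntegral_preimage_emb
      (measurableEmbedding_addLeft x) Λ (Ioi x)).symm
  have hint (c x : ℝ) : IntegrableOn (fun t => c * Λ (x + t)) (Ioi 0) :=
    ((hΛ.1.comp_add_left x).const_mul c).integrableOn
  rw [htail x, htail y, ← integral_const_mul, ← integral_const_mul]
  refine setIntegral_mono_on (hint _ _) (hint _ _) measurableSet_Ioi fun t ht => ?_
  exact hΛ.isTNToeplitz.mul_le_mul hxy (lt_add_of_pos_right x ht) (by ring)

lemma integral_Ioi_pos (hΛ : IsPolyaFrequencyFunction Λ) {x y : ℝ} (hxy : x < y) (hx : Λ x ≠ 0)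
    (hy : Λ y ≠ 0) : 0 < ∫ t in Ioi x, Λ t := by
  rw [setIntegral_pos_iff_support_of_nonneg_ae (Eventually.of_forall hΛ.2.1) hΛ.1.integrableOn]
  refine lt_of_lt_of_le ?_ (measure_mono (s := Ioo x y) fun t ht =>
    ⟨hΛ.isTNToeplitz.ordConnected_support.out hx hy ⟨ht.1.le, ht.2.le⟩, ht.1⟩)
  simpa using hxy

lemma measurable (hΛ : IsPolyaFrequencyFunction Λ) : Measurable Λ := by
  refine measurable_of_mul_le_mul_antitone hΛ.antitone_integral_Ioi
    (fun x => integral_nonneg hΛ.2.1) (fun x y hxy => hΛ.mul_integral_Ioi_le hxy)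
    (Set.Subsingleton.countable fun x hx y hy => ?_)
  by_contra hne
  rcases lt_or_gt_of_ne hne with h | h
  · exact (hΛ.integral_Ioi_pos h hx.2 hy.2).ne' hx.1
  · exact (hΛ.integral_Ioi_pos h hy.2 hx.2).ne' hy.1

lemma isTNFun (hΛ : IsPolyaFrequencyFunction Λ) : IsTNFun Λ := ⟨hΛ.measurable, hΛ.isTNToeplitz⟩

end IsPolyaFrequencyFunction

/-! ### Determinant identities -/

section DeterminantIdentities

variable {R : Type*} [CommRing R]

lemma det_mul_det_adjugate_toBlocks₂₂ {m n : Type*} [Fintype m] [Fintype n] [DecidableEq m]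
    [DecidableEq n] (M : Matrix (m ⊕ n) (m ⊕ n) R) :
    M.det * M.adjugate.toBlocks₂₂.det = M.toBlocks₁₁.det * M.det ^ Fintype.card n := by
  set A := M.adjugate
  have hMA : M * A = Matrix.fromBlocks (M.det • 1) 0 0 (M.det • 1) := by
    rw [Matrix.mul_adjugate, ← Matrix.fromBlocks_one, Matrix.fromBlocks_smul, smul_zero, smul_zero]
  rw [← Matrix.fromBlocks_toBlocks M, ← Matrix.fromBlocks_toBlocks A,
    Matrix.fromBlocks_multiply] at hMA
  obtain ⟨_, h₁₂, _, h₂₂⟩ := Matrix.fromBlocks_inj.mp hMA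
  have key : M * Matrix.fromBlocks 1 A.toBlocks₁₂ 0 A.toBlocks₂₂ =
      Matrix.fromBlocks M.toBlocks₁₁ 0 M.toBlocks₂₁ (M.det • 1) := by
    conv_lhs => rw [← Matrix.fromBlocks_toBlocks M]
    rw [Matrix.fromBlocks_multiply, h₁₂, h₂₂, Matrix.fromBlocks_toBlocks]
    simp
  simpa using congrArg Matrix.det key

/-- The bijection `Fin k ⊕ Fin 2 ≃ Fin (k + 2)` that lists the inner indices before the first and
the last one. -/
noncomputable def innerSumEndsEquiv (k : ℕ) : Fin k ⊕ Fin 2 ≃ Fin (k + 2) :=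
  Equiv.ofBijective (Sum.elim (fun i => i.castSucc.succ) ![0, Fin.last (k + 1)]) <| by
    rw [Fintype.bijective_iff_injective_and_card]
    refine ⟨Function.Injective.sumElim (fun i j h => by simpa using h) ?_ fun i j => ?_, by simp⟩
    · intro i j
      fin_cases i <;> fin_cases j <;> simp [Fin.ext_iff]
    · fin_cases j <;> simp [Fin.ext_iff, i.2.ne]

lemma det_inner_mul_det {k : ℕ} (M : Matrix (Fin (k + 2)) (Fin (k + 2)) R) :
    M.det * (M.adjugate 0 0 * M.adjugate (Fin.last _) (Fin.last _)
      - M.adjugate 0 (Fin.last _) * M.adjugate (Fin.last _) 0) =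
    (M.submatrix (fun i : Fin k => i.castSucc.succ) fun i : Fin k => i.castSucc.succ).det
      * M.det ^ 2 := by
  have h := det_mul_det_adjugate_toBlocks₂₂ (M.submatrix (innerSumEndsEquiv k)
    (innerSumEndsEquiv k))
  rwa [Matrix.det_submatrix_equiv_self, Matrix.adjugate_submatrix_equiv_self,
    Matrix.det_fin_two, Fintype.card_fin] at h

lemma adjugate_zero_zero {n : ℕ} (M : Matrix (Fin (n + 1)) (Fin (n + 1)) R) :
    M.adjugate 0 0 = (M.submatrix Fin.succ Fin.succ).det := by
  simp [Matrix.adjugate_fin_succ_eq_det_submatrix]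

lemma adjugate_last_last {n : ℕ} (M : Matrix (Fin (n + 1)) (Fin (n + 1)) R) :
    M.adjugate (Fin.last _) (Fin.last _) = (M.submatrix Fin.castSucc Fin.castSucc).det := by
  simp [Matrix.adjugate_fin_succ_eq_det_submatrix]

lemma adjugate_zero_last_mul_adjugate_last_zero {n : ℕ}
    (M : Matrix (Fin (n + 1)) (Fin (n + 1)) R) :
    M.adjugate 0 (Fin.last _) * M.adjugate (Fin.last _) 0 =
      (M.submatrix Fin.castSucc Fin.succ).det * (M.submatrix Fin.succ Fin.castSucc).det := by
  have hsign : ((-1) ^ n * (-1) ^ n : R) = 1 := by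
    rw [← mul_pow, neg_one_mul, neg_neg, one_pow]
  simp only [Matrix.adjugate_fin_succ_eq_det_submatrix, Fin.val_last, Fin.val_zero, add_zero,
    zero_add, Fin.succAbove_last, Fin.succAbove_zero]
  rw [mul_mul_mul_comm, hsign, one_mul]

/-- The Desnanot–Jacobi identity. Cancelling `M.det` is legitimate for the generic matrix over `ℤ`,
of which every other matrix is a specialization. -/
theorem det_succ_succ_mul_det_castSucc_castSucc {k : ℕ}
    (M : Matrix (Fin (k + 2)) (Fin (k + 2)) R) :
    (M.submatrix Fin.succ Fin.succ).det * (M.submatrix Fin.castSucc Fin.castSucc).det =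
    M.det * (M.submatrix (fun i : Fin k => i.castSucc.succ) fun i : Fin k => i.castSucc.succ).det
      + (M.submatrix Fin.succ Fin.castSucc).det * (M.submatrix Fin.castSucc Fin.succ).det := by
  have hgeneric : let X := Matrix.mvPolynomialX (Fin (k + 2)) (Fin (k + 2)) ℤ
      (X.submatrix Fin.succ Fin.succ).det * (X.submatrix Fin.castSucc Fin.castSucc).det =
      X.det * (X.submatrix (fun i : Fin k => i.castSucc.succ)
        fun i : Fin k => i.castSucc.succ).det
        + (X.submatrix Fin.succ Fin.castSucc).det * (X.submatrix Fin.castSucc Fin.succ).det := by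
    intro X
    have h := det_inner_mul_det X
    rw [adjugate_zero_zero, adjugate_last_last, adjugate_zero_last_mul_adjugate_last_zero] at h
    refine mul_left_cancel₀ (Matrix.det_mvPolynomialX_ne_zero _ ℤ) ?_
    linear_combination h
  have h := congrArg (MvPolynomial.aeval fun p : Fin (k + 2) × Fin (k + 2) => M p.1 p.2) hgeneric
  simp only [map_add, map_mul, AlgHom.map_det, AlgHom.mapMatrix_apply, ← Matrix.submatrix_map]
    at h
  simpa only [← AlgHom.mapMatrix_apply, Matrix.mvPolynomialX_mapMatrix_aeval] using h

lemma det_of_last_entries_eq_zero {k : ℕ} (M : Matrix (Fin (k + 2)) (Fin (k + 2)) R)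
    (hcol : ∀ i : Fin k, M i.castSucc.castSucc (Fin.last _) = 0)
    (hrow : ∀ j : Fin k, M (Fin.last _) j.castSucc.castSucc = 0) :
    M.det = M (Fin.last _) (Fin.last _) * (M.submatrix Fin.castSucc Fin.castSucc).det -
      M (Fin.last k).castSucc (Fin.last _) * M (Fin.last _) (Fin.last k).castSucc *
        (M.submatrix (fun i : Fin k => i.castSucc.castSucc)
          fun i : Fin k => i.castSucc.castSucc).det := by
  have hrows : (Fin.last k).castSucc.succAbove ∘ Fin.castSucc =
      fun i : Fin k => i.castSucc.castSucc := by
    ext i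
    simp [Fin.succAbove, Fin.lt_def]
  have hlast : (Fin.last k).castSucc.succAbove (Fin.last k) = Fin.last (k + 1) := by
    rw [Fin.succAbove_castSucc_self, Fin.succ_last]
  have hminor : (M.submatrix (Fin.last k).castSucc.succAbove Fin.castSucc).det =
      M (Fin.last _) (Fin.last k).castSucc * (M.submatrix (fun i : Fin k => i.castSucc.castSucc)
        fun i : Fin k => i.castSucc.castSucc).det := by
    rw [det_eq_of_last_row_eq_zero _ fun j => by simp [hlast, hrow],
      Matrix.submatrix_submatrix, hrows, Matrix.submatrix_apply, hlast]
    rfl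
  rw [Matrix.det_succ_column M (Fin.last _), Fin.sum_univ_castSucc, Fin.sum_univ_castSucc]
  simp only [hcol, hminor, mul_zero, zero_mul, Finset.sum_const_zero, zero_add,
    Fin.succAbove_last, Fin.val_castSucc, Fin.val_last, pow_add, pow_one]
  have hsign : ((-1) ^ k * (-1) ^ k : R) = 1 := by
    rw [← mul_pow, neg_one_mul, neg_neg, one_pow]
  linear_combination (M (Fin.last _) (Fin.last _) * (M.submatrix Fin.castSucc Fin.castSucc).det -
      M (Fin.last k).castSucc (Fin.last _) * M (Fin.last _) (Fin.last k).castSucc *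
        (M.submatrix (fun i : Fin k => i.castSucc.castSucc)
          fun i : Fin k => i.castSucc.castSucc).det) * hsign

end DeterminantIdentities

/-! ### Minors of a Toeplitz matrix -/

/-- The `k × k` minor with consecutive rows and columns of the Toeplitz matrix of `a`, with `a r`
on its diagonal. -/
def toeplitzMinor {R : Type*} [CommRing R] (a : ℤ → R) (r : ℤ) (k : ℕ) : R :=
  (Matrix.of fun i j : Fin k => a (r + i - j)).det

section ToeplitzMinor

variable {R : Type*} [CommRing R] (a : ℤ → R) (r : ℤ) (k : ℕ)

@[simp] lemma toeplitzMinor_zero : toeplitzMinor a r 0 = 1 := by simp [toeplitzMinor]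

@[simp] lemma toeplitzMinor_one : toeplitzMinor a r 1 = a r := by simp [toeplitzMinor]

variable {a r} in
lemma toeplitzMinor_of_forall_lt (h : ∀ m < r, a m = 0) : toeplitzMinor a r k = a r ^ k := by
  rw [toeplitzMinor, Matrix.det_of_isLowerTriangular]
  · simp
  · intro i j hij
    have : (i : ℕ) < j := hij
    exact h _ (by omega)

variable {a r} in
lemma toeplitzMinor_of_forall_gt (h : ∀ m, r < m → a m = 0) :
    toeplitzMinor a r k = a r ^ k := by
  rw [toeplitzMinor, Matrix.det_of_isUpperTriangular]
  · simp
  · intro i j hij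
    have : (j : ℕ) < i := hij
    exact h _ (by omega)

lemma toeplitzMinor_sq : toeplitzMinor a r (k + 1) ^ 2 =
    toeplitzMinor a r (k + 2) * toeplitzMinor a r k
      + toeplitzMinor a (r + 1) (k + 1) * toeplitzMinor a (r - 1) (k + 1) := by
  have h := det_succ_succ_mul_det_castSucc_castSucc
    (Matrix.of fun i j : Fin (k + 2) => a (r + i - j))
  simp only [Matrix.submatrix, Matrix.of_apply, Fin.val_succ, Fin.val_castSucc, Nat.cast_add,
    Nat.cast_one] at h
  have hdiag (x y : ℤ) : r + (x + 1) - (y + 1) = r + x - y := by ring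
  have hlower (x y : ℤ) : r + (x + 1) - y = r + 1 + x - y := by ring
  have hupper (x y : ℤ) : r + x - (y + 1) = r - 1 + x - y := by ring
  simp only [hdiag, hlower, hupper] at h
  rw [sq]
  exact h

end ToeplitzMinor

/-- The difference of the two sides is the minor of size `k + 2` obtained from the one of size
`k + 1` by adding a row and a column that meet `[lo, hi]` only at its end points. -/
lemma IsTNToeplitz.mul_toeplitzMinor_le {a : ℤ → ℝ} (ha : IsTNToeplitz a) {lo hi : ℤ}
    (hzero : ∀ m ∉ Icc lo hi, a m = 0) {r : ℤ} (hr : r ∈ Ioo lo hi) (k : ℕ) :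
    a lo * a hi * toeplitzMinor a r k ≤ a (lo + hi - r) * toeplitzMinor a r (k + 1) := by
  obtain ⟨hlo, hhi⟩ := hr
  let x : Fin (k + 2) → ℤ := fun i => if (i : ℕ) ≤ k then r + i else hi + k
  let y : Fin (k + 2) → ℤ := fun j => if (j : ℕ) ≤ k then j else r + k - lo
  have hx : StrictMono x := fun i j (h : (i : ℕ) < j) => by
    simp only [x]; split_ifs <;> omega
  have hy : StrictMono y := fun i j (h : (i : ℕ) < j) => by
    simp only [y]; split_ifs <;> omega
  have hx_init (i : Fin (k + 1)) : x i.castSucc = r + i := if_pos (by simp; omega)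
  have hy_init (j : Fin (k + 1)) : y j.castSucc = j := if_pos (by simp; omega)
  have hx_last : x (Fin.last _) = hi + k := if_neg (by simp)
  have hy_last : y (Fin.last _) = r + k - lo := if_neg (by simp)
  have h := ha (k + 2) x y hx hy
  have hcol (i : Fin k) : a (x i.castSucc.castSucc - y (Fin.last _)) = 0 := hzero _ <| by
    simp only [hx_init, hy_last, mem_Icc, Fin.val_castSucc]
    omega
  have hrow (j : Fin k) : a (x (Fin.last _) - y j.castSucc.castSucc) = 0 := hzero _ <| by
    simp only [hx_last, hy_init, mem_Icc, Fin.val_castSucc]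
    omega
  rw [det_of_last_entries_eq_zero _ hcol hrow] at h
  simp only [Matrix.submatrix, Matrix.of_apply, hx_init, hy_init, hx_last, hy_last,
    Fin.val_castSucc, Fin.val_last] at h
  rw [show hi + k - (r + k - lo) = lo + hi - r by ring, show r + k - (r + k - lo) = lo by ring,
    add_sub_cancel_right] at h
  exact sub_nonneg.mp h

lemma IsTNToeplitz.toeplitzMinor_pos {a : ℤ → ℝ} (ha : IsTNToeplitz a) {lo hi : ℤ}
    (hsupp : Function.support a = Icc lo hi) {r : ℤ} (hr : r ∈ Icc lo hi) (k : ℕ) :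
    0 < toeplitzMinor a r k := by
  have hpos (m : ℤ) (hm : m ∈ Icc lo hi) : 0 < a m :=
    ha.pos_of_ne_zero (Function.mem_support.mp (hsupp ▸ hm))
  have hzero (m : ℤ) (hm : m ∉ Icc lo hi) : a m = 0 :=
    Function.notMem_support.mp (hsupp ▸ hm)
  obtain ⟨hlo, hhi⟩ := hr
  rcases hlo.eq_or_lt with rfl | hlo'
  · rw [toeplitzMinor_of_forall_lt k fun m hm => hzero m fun h => hm.not_ge h.1]
    exact pow_pos (hpos _ ⟨le_rfl, hhi⟩) k
  rcases hhi.eq_or_lt with rfl | hhi'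
  · rw [toeplitzMinor_of_forall_gt k fun m hm => hzero m fun h => hm.not_ge h.2]
    exact pow_pos (hpos _ ⟨hlo, le_rfl⟩) k
  induction k with
  | zero => simp
  | succ k ih =>
    have hlt : 0 < a lo * a hi * toeplitzMinor a r k :=
      mul_pos (mul_pos (hpos _ ⟨le_rfl, hlo.trans hhi⟩) (hpos _ ⟨hlo.trans hhi, le_rfl⟩)) ih
    exact pos_of_mul_pos_right
      (hlt.trans_le (ha.mul_toeplitzMinor_le hzero ⟨hlo', hhi'⟩ k)) (ha.nonneg _)

/-! ### A comparison principle for the discrete Toda equation -/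

lemma two_mul_posPart_sub_posPart_le {a b c x y w : ℝ} (hsign : 0 < b ↔ 0 < y)
    (h : c - 2 * b + a = 2 * y - w - x) : 2 * y⁺ - w⁺ - x⁺ ≤ c⁺ - 2 * b⁺ + a⁺ := by
  by_cases hb : 0 < b
  · rw [posPart_of_nonneg hb.le, posPart_of_nonneg (hsign.mp hb).le]
    linarith [le_posPart w, le_posPart x, le_posPart a, le_posPart c]
  · rw [posPart_of_nonpos (not_lt.mp hb), posPart_of_nonpos (not_lt.mp (mt hsign.mpr hb))]
    linarith [posPart_nonneg w, posPart_nonneg x, posPart_nonneg a, posPart_nonneg c]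

lemma nat_mul_le_of_convex {S : ℕ → ℝ} (h0 : S 0 = 0)
    (hconvex : ∀ k, 0 ≤ S (k + 2) - 2 * S (k + 1) + S k) (k : ℕ) : k * S 1 ≤ S k := by
  have hslope (k : ℕ) : S 1 ≤ S (k + 1) - S k := by
    induction k with
    | zero => simp [h0]
    | succ k ih => linarith [hconvex k]
  induction k with
  | zero => simp [h0]
  | succ k ih =>
    push_cast
    linarith [hslope k]

lemma nonpos_of_convex_of_isLittleO {S : ℕ → ℝ} (h0 : S 0 = 0)
    (hconvex : ∀ k, 0 ≤ S (k + 2) - 2 * S (k + 1) + S k)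
    (hS : S =o[atTop] fun k : ℕ => (k : ℝ)) : S 1 ≤ 0 := by
  refine ge_of_tendsto hS.tendsto_div_nhds_zero ?_
  filter_upwards [eventually_gt_atTop 0] with k hk
  rw [le_div_iff₀ (by exact_mod_cast hk), mul_comm]
  exact nat_mul_le_of_convex h0 hconvex k

lemma sum_range_second_difference (Z : ℕ → ℝ) (N : ℕ) :
    ∑ r ∈ Finset.range N, (2 * Z (r + 1) - Z (r + 2) - Z r) = Z 1 - Z 0 + Z N - Z (N + 1) := by
  induction N with
  | zero => simp
  | succ N ih =>
    rw [Finset.sum_range_succ, ih]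
    ring

/-- Summing the positive parts of `e` over `r` gives a convex sequence of sublinear growth. -/
theorem nonpos_of_second_difference_eq {N : ℕ} {e z : ℕ → ℕ → ℝ} {g : ℕ → ℝ}
    (hsign : ∀ r < N, ∀ k, 0 < e r (k + 1) ↔ 0 < z (r + 1) k)
    (hdiff : ∀ r < N, ∀ k, e r (k + 2) - 2 * e r (k + 1) + e r k =
      2 * z (r + 1) k - z (r + 2) k - z r k)
    (hbot : ∀ k, z 0 k ≤ 0) (htop : ∀ k, z (N + 1) k ≤ 0) (hinit : ∀ r < N, e r 0 ≤ 0)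
    (hle : ∀ r < N, ∀ k, e r k ≤ g k) (hg : g =o[atTop] fun k : ℕ => (k : ℝ))
    {r : ℕ} (hr : r < N) : e r 1 ≤ 0 := by
  set S : ℕ → ℝ := fun k => ∑ r ∈ Finset.range N, (e r k)⁺
  have hconvex (k : ℕ) : 0 ≤ S (k + 2) - 2 * S (k + 1) + S k := by
    have h : ∑ r ∈ Finset.range N, (2 * (z (r + 1) k)⁺ - (z (r + 2) k)⁺ - (z r k)⁺) ≤
        ∑ r ∈ Finset.range N, ((e r (k + 2))⁺ - 2 * (e r (k + 1))⁺ + (e r k)⁺) :=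
      Finset.sum_le_sum fun r hr => two_mul_posPart_sub_posPart_le
        (hsign r (Finset.mem_range.mp hr) k) (hdiff r (Finset.mem_range.mp hr) k)
    rw [sum_range_second_difference fun r => (z r k)⁺, posPart_of_nonpos (hbot k),
      posPart_of_nonpos (htop k), Finset.sum_add_distrib, Finset.sum_sub_distrib,
      ← Finset.mul_sum] at h
    linarith [posPart_nonneg (z 1 k), posPart_nonneg (z N k)]
  have hS0 : S 0 = 0 := Finset.sum_eq_zero fun r hr =>
    posPart_of_nonpos (hinit r (Finset.mem_range.mp hr))
  have hgrowth : S =o[atTop] fun k : ℕ => (k : ℝ) := by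
    refine Asymptotics.IsLittleO.fun_sum fun r hr =>
      (Asymptotics.IsBigO.of_norm_le fun k => ?_).trans_isLittleO hg.norm_left
    rw [Real.norm_of_nonneg (posPart_nonneg _)]
    exact sup_le ((hle r (Finset.mem_range.mp hr) k).trans (le_abs_self _)) (abs_nonneg _)
  calc e r 1 ≤ (e r 1)⁺ := le_posPart _
    _ ≤ S 1 := Finset.single_le_sum (f := fun r => (e r 1)⁺) (fun r _ => posPart_nonneg _)
      (Finset.mem_range.mpr hr)
    _ ≤ 0 := nonpos_of_convex_of_isLittleO hS0 hconvex hgrowth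

/-- The log-concavity gap of three consecutive terms `a, b, c` of a positive sequence: the
logarithm of `b ^ 2 / (a * c)`, which measures by how much the sequence is log-concave at `b`. -/
noncomputable def logConcavityGap (a b c : ℝ) : ℝ := 2 * Real.log b - Real.log a - Real.log c

lemma exp_neg_logConcavityGap {a b c : ℝ} (ha : 0 < a) (hb : 0 < b) (hc : 0 < c) :
    Real.exp (-logConcavityGap a b c) = a * c / b ^ 2 := by
  have h : -logConcavityGap a b c = Real.log (a * c / b ^ 2) := by
    rw [Real.log_div (by positivity) (by positivity), Real.log_mul ha.ne' hc.ne', Real.log_pow,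
      logConcavityGap]
    push_cast
    ring
  rw [h, Real.exp_log (by positivity)]

/-- An array `T r k`, `0 ≤ r ≤ N + 1`, `0 ≤ k`, of positive numbers that satisfies the same
discrete Toda equation and the same boundary conditions as the Toeplitz minors of a totally
non-negative sequence with support `{0, …, N + 1}`. -/
structure IsTodaArray (N : ℕ) (T : ℕ → ℕ → ℝ) : Prop where
  pos : ∀ r ≤ N + 1, ∀ k, 0 < T r k
  init : ∀ r ≤ N + 1, T r 0 = 1
  bot : ∀ k, T 0 k = T 0 1 ^ k
  top : ∀ k, T (N + 1) k = T (N + 1) 1 ^ k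
  sq : ∀ r < N, ∀ k, T (r + 1) (k + 1) ^ 2 =
    T (r + 1) (k + 2) * T (r + 1) k + T (r + 2) (k + 1) * T r (k + 1)

lemma exp_neg_log_add_sub_log_add {x y : ℝ} (hx : 0 < x) (hy : 0 < y) :
    Real.exp (-(Real.log (x + y) - Real.log x)) + Real.exp (-(Real.log (x + y) - Real.log y))
      = 1 := by
  rw [neg_sub, neg_sub, Real.exp_sub, Real.exp_sub, Real.exp_log hx, Real.exp_log hy,
    Real.exp_log (add_pos hx hy), ← add_div, div_self (add_pos hx hy).ne']

lemma lt_iff_lt_of_exp_neg_add_exp_neg_eq {v w v' w' : ℝ}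
    (h : Real.exp (-v) + Real.exp (-w) = Real.exp (-v') + Real.exp (-w')) : v < v' ↔ w' < w := by
  have hexp (a b : ℝ) : a < b ↔ Real.exp (-b) < Real.exp (-a) := by
    rw [Real.exp_lt_exp, neg_lt_neg_iff]
  rw [hexp v, hexp w']
  constructor <;> intro <;> linarith

lemma logConcavityGap_pow (x : ℝ) (k : ℕ) :
    logConcavityGap (x ^ k) (x ^ (k + 1)) (x ^ (k + 2)) = 0 := by
  simp only [logConcavityGap, Real.log_pow]
  push_cast
  ring

lemma isLittleO_log_one_add_nat :
    (fun k : ℕ => Real.log (1 + k)) =o[atTop] fun k : ℕ => (k : ℝ) := by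
  have htop : Tendsto (fun k : ℕ => (1 + k : ℝ)) atTop atTop :=
    tendsto_atTop_add_const_left _ _ tendsto_natCast_atTop_atTop
  refine (Real.isLittleO_log_id_atTop.comp_tendsto htop).trans_isBigO ?_
  refine Asymptotics.IsBigO.of_bound 2 ?_
  filter_upwards [eventually_ge_atTop 1] with k hk
  have hk' : (1 : ℝ) ≤ k := by exact_mod_cast hk
  simp only [Function.comp_apply, id, Real.norm_of_nonneg (by positivity : (0 : ℝ) ≤ 1 + k),
    Real.norm_of_nonneg (Nat.cast_nonneg k)]
  linarith

namespace IsTodaArray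

variable {N : ℕ} {T : ℕ → ℕ → ℝ}

lemma exp_neg_gap_add_exp_neg_gap (hT : IsTodaArray N T) {r : ℕ} (hr : r < N) (k : ℕ) :
    Real.exp (-logConcavityGap (T r (k + 1)) (T (r + 1) (k + 1)) (T (r + 2) (k + 1)))
      + Real.exp (-logConcavityGap (T (r + 1) k) (T (r + 1) (k + 1)) (T (r + 1) (k + 2))) = 1 := by
  have hpos := hT.pos (r + 1) (by omega) (k + 1)
  rw [exp_neg_logConcavityGap (hT.pos _ (by omega) _) hpos (hT.pos _ (by omega) _),
    exp_neg_logConcavityGap (hT.pos _ (by omega) _) hpos (hT.pos _ (by omega) _), ← add_div,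
    div_eq_one_iff_eq (by positivity), hT.sq r hr k]
  ring

lemma gap_nonneg (hT : IsTodaArray N T) {r : ℕ} (hr : r < N) (k : ℕ) :
    0 ≤ logConcavityGap (T r k) (T (r + 1) k) (T (r + 2) k) := by
  rcases k with _ | k
  · rw [hT.init r (by omega), hT.init (r + 1) (by omega), hT.init (r + 2) (by omega)]
    simp [logConcavityGap]
  · rw [← neg_nonpos, ← Real.exp_le_one_iff]
    linarith [hT.exp_neg_gap_add_exp_neg_gap hr k, Real.exp_pos
      (-logConcavityGap (T (r + 1) k) (T (r + 1) (k + 1)) (T (r + 1) (k + 2)))]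

/-- The right-hand side is compared with its value for the Toeplitz minors of `r ↦ 1 / r!`, which
solve the Toda equation on an infinite array. -/
theorem log_sub_log_le_gap (hT : IsTodaArray N T) {r : ℕ} (hr : r < N) :
    Real.log (r + 2) - Real.log (r + 1) ≤ logConcavityGap (T r 1) (T (r + 1) 1) (T (r + 2) 1) := by
  let e (r k : ℕ) : ℝ := Real.log (r + 1 + k) - Real.log (r + 1)
    - logConcavityGap (T r k) (T (r + 1) k) (T (r + 2) k)
  let z (r k : ℕ) : ℝ := logConcavityGap (T r k) (T r (k + 1)) (T r (k + 2))
    - (Real.log (r + 1 + k) - Real.log (k + 1))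
  suffices h : e r 1 ≤ 0 by
    simp only [e, Nat.cast_one, add_assoc, one_add_one_eq_two] at h
    linarith
  refine nonpos_of_second_difference_eq (z := z) (fun r hr k => ?_) (fun r _ k => ?_)
    (fun k => ?_) (fun k => ?_) (fun r hr => ?_) (fun r hr k => ?_) isLittleO_log_one_add_nat hr
  · have hmodel := exp_neg_log_add_sub_log_add (x := r + 1) (y := k + 1) (by positivity)
      (by positivity)
    have hz : (r : ℝ) + 1 + 1 + k = r + 1 + (k + 1) := by ring
    simp only [e, z, sub_pos, Nat.cast_add, Nat.cast_one, hz]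
    exact lt_iff_lt_of_exp_neg_add_exp_neg_eq
      ((hT.exp_neg_gap_add_exp_neg_gap hr k).trans hmodel.symm)
  · simp only [e, z, logConcavityGap, Nat.cast_add, Nat.cast_one, Nat.cast_ofNat]
    ring_nf
  · simp only [z]
    rw [hT.bot, hT.bot (k + 1), hT.bot (k + 2), logConcavityGap_pow]
    simp [add_comm]
  · simp only [z]
    rw [hT.top, hT.top (k + 1), hT.top (k + 2), logConcavityGap_pow, zero_sub, neg_nonpos,
      sub_nonneg]
    exact Real.log_le_log (by positivity) (by push_cast; linarith [(N.cast_nonneg : (0 : ℝ) ≤ N)])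
  · simpa [e] using hT.gap_nonneg hr 0
  · have hlog : Real.log (r + 1 + k) ≤ Real.log (r + 1) + Real.log (1 + k) := by
      rw [← Real.log_mul (by positivity) (by positivity)]
      refine Real.log_le_log (by positivity) ?_
      linarith [(by positivity : (0 : ℝ) ≤ r * k)]
    simp only [e]
    linarith [hT.gap_nonneg hr k]

end IsTodaArray

/-! ### Support of a totally non-negative function -/

lemma IsTNToeplitz.isTodaArray_toeplitzMinor {a : ℤ → ℝ} (ha : IsTNToeplitz a) {lo : ℤ} {N : ℕ}
    (hsupp : Function.support a = Icc lo (lo + (N + 1 : ℕ))) :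
    IsTodaArray N fun r k => toeplitzMinor a (lo + r) k where
  pos r hr k := ha.toeplitzMinor_pos hsupp ⟨by omega, by omega⟩ k
  init _ _ := toeplitzMinor_zero _ _
  bot k := by
    rw [toeplitzMinor_one]
    refine toeplitzMinor_of_forall_lt k fun m hm => Function.notMem_support.mp fun h => ?_
    have := (hsupp ▸ h : m ∈ Icc lo _).1
    omega
  top k := by
    rw [toeplitzMinor_one]
    refine toeplitzMinor_of_forall_gt k fun m hm => Function.notMem_support.mp fun h => ?_
    exact hm.not_ge (hsupp ▸ h : m ∈ Icc lo _).2
  sq r _ k := by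
    have h := toeplitzMinor_sq a (lo + (r + 1 : ℕ)) k
    rwa [show lo + (r + 1 : ℕ) + 1 = lo + (r + 2 : ℕ) by push_cast; ring,
      show lo + (r + 1 : ℕ) - 1 = lo + r by push_cast; ring] at h

lemma IsTNToeplitz.inv_le_logConcavityGap {a : ℤ → ℝ} (ha : IsTNToeplitz a) {lo hi : ℤ}
    (hsupp : Function.support a = Icc lo hi) {j : ℤ} (hlo : lo ≤ j) (hhi : j + 2 ≤ hi) :
    ((hi - lo : ℤ) : ℝ)⁻¹ ≤ logConcavityGap (a j) (a (j + 1)) (a (j + 2)) := by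
  obtain ⟨N, rfl⟩ : ∃ N : ℕ, hi = lo + (N + 1 : ℕ) := ⟨(hi - lo - 1).toNat, by omega⟩
  obtain ⟨r, rfl⟩ := Int.le.dest hlo
  have hr : r < N := by omega
  have hgap := (ha.isTodaArray_toeplitzMinor hsupp).log_sub_log_le_gap hr
  simp only [toeplitzMinor_one, Nat.cast_add, Nat.cast_one, Nat.cast_ofNat, ← add_assoc] at hgap
  refine le_trans ?_ hgap
  rw [← Real.log_div (by positivity) (by positivity)]
  calc (((lo + (N + 1 : ℕ) - lo : ℤ) : ℝ))⁻¹ = ((N : ℝ) + 1)⁻¹ := by push_cast; ring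
    _ ≤ ((r : ℝ) + 2)⁻¹ := by
      have : (r : ℝ) + 1 ≤ N := by exact_mod_cast hr
      exact inv_anti₀ (by positivity) (by linarith)
    _ = 1 - (((r : ℝ) + 2) / (r + 1))⁻¹ := by field_simp; ring
    _ ≤ Real.log (((r : ℝ) + 2) / (r + 1)) := Real.one_sub_inv_le_log_of_pos (by positivity)

lemma sq_mul_le_logConcavityGap {g : ℕ → ℝ} {δ : ℝ} {M : ℕ}
    (h : ∀ k, k + 2 ≤ 2 * M → δ ≤ 2 * g (k + 1) - g k - g (k + 2)) :
    M ^ 2 * δ ≤ 2 * g M - g 0 - g (2 * M) := by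
  have hslope (j : ℕ) : ∀ k, k + j + 1 ≤ 2 * M →
      g (k + j + 1) - g (k + j) ≤ g (k + 1) - g k - j * δ := by
    induction j with
    | zero => simp
    | succ j ih =>
      intro k hk
      have := h (k + j) (by omega)
      push_cast
      rw [← add_assoc]
      linarith [ih k (by omega)]
  have hsum (k : ℕ) : k ≤ M → g (k + M) - g k ≤ g M - g 0 - k * (M * δ) := by
    induction k with
    | zero => simp
    | succ k ih =>
      intro hk
      have := hslope M k (by omega)
      push_cast
      rw [show k + 1 + M = k + M + 1 by ring]
      linarith [ih (by omega)]
  have := hsum M le_rfl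
  rw [← two_mul] at this
  linarith

lemma eq_Icc_of_ordConnected_of_bdd {S : Set ℤ} (hS : S.OrdConnected) (hne : S.Nonempty)
    (hbelow : BddBelow S) (habove : BddAbove S) : S = Icc (sInf S) (sSup S) :=
  Subset.antisymm (fun _ hk => ⟨csInf_le hbelow hk, le_csSup habove hk⟩)
    (hS.out (Int.csInf_mem hne hbelow) (Int.csSup_mem hne habove))

lemma isUpperSet_of_ordConnected_of_not_bddAbove {S : Set ℝ} (hS : S.OrdConnected)
    (habove : ¬BddAbove S) : IsUpperSet S := fun x y hxy hx => by
  obtain ⟨z, hz, hyz⟩ := not_bddAbove_iff.mp habove y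
  exact hS.out hx hz ⟨hxy, hyz.le⟩

lemma isLowerSet_of_ordConnected_of_not_bddBelow {S : Set ℝ} (hS : S.OrdConnected)
    (hbelow : ¬BddBelow S) : IsLowerSet S := fun x y hyx hx => by
  obtain ⟨z, hz, hzy⟩ := not_bddBelow_iff.mp hbelow y
  exact hS.out hz hx ⟨hzy.le, hyx⟩

namespace IsTNToeplitz

variable {f : ℝ → ℝ} {A B p h : ℝ}

lemma comp_add_intCast_mul (hf : IsTNToeplitz f) (p : ℝ) (hh : 0 < h) :
    IsTNToeplitz fun k : ℤ => f (p + k * h) := by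
  have hcast : StrictMono fun k : ℤ => (k : ℝ) * h := Int.cast_strictMono.mul_const hh
  have hK := hf.comp_strictMono (hcast.const_add p) hcast
  change IsTNKernel fun x y : ℤ => f (p + (x - y : ℤ) * h)
  convert hK using 4
  push_cast
  ring

lemma exists_support_comp_eq_Icc (hf : IsTNToeplitz f) (hsupp : Function.support f ⊆ Icc A B)
    (hh : 0 < h) (hp : f p ≠ 0) : ∃ lo hi : ℤ,
      Function.support (fun k : ℤ => f (p + k * h)) = Icc lo hi ∧ (hi - lo : ℤ) * h ≤ B - A := by
  set S := Function.support fun k : ℤ => f (p + k * h)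
  have hmem {k : ℤ} (hk : k ∈ S) : p + k * h ∈ Icc A B := hsupp hk
  have hne : S.Nonempty := ⟨0, by simpa [S] using hp⟩
  have hbelow : BddBelow S := ⟨⌊(A - p) / h⌋, fun k hk => by
    have hk' : (A - p) / h ≤ k := by
      rw [div_le_iff₀ hh]
      linarith [(hmem hk).1]
    exact_mod_cast (Int.floor_le _).trans hk'⟩
  have habove : BddAbove S := ⟨⌈(B - p) / h⌉, fun k hk => by
    have hk' : k ≤ (B - p) / h := by
      rw [le_div_iff₀ hh]
      linarith [(hmem hk).2]
    exact_mod_cast hk'.trans (Int.le_ceil _)⟩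
  refine ⟨sInf S, sSup S, eq_Icc_of_ordConnected_of_bdd
    (hf.comp_add_intCast_mul p hh).ordConnected_support hne hbelow habove, ?_⟩
  push_cast
  linarith [(hmem (Int.csSup_mem hne habove)).2, (hmem (Int.csInf_mem hne hbelow)).1]

lemma sq_mul_div_le_logConcavityGap (hf : IsTNToeplitz f) (hsupp : Function.support f ⊆ Icc A B)
    (hh : 0 < h) {M : ℕ} (hM : 0 < M) (hp : f p ≠ 0) (hq : f (p + (2 * M : ℕ) * h) ≠ 0) :
    M ^ 2 * (h / (B - A)) ≤ logConcavityGap (f p) (f (p + M * h)) (f (p + (2 * M : ℕ) * h)) := by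
  obtain ⟨lo, hi, hgrid, hwidth⟩ := hf.exists_support_comp_eq_Icc hsupp hh hp
  have h0 : (0 : ℤ) ∈ Icc lo hi := hgrid ▸ (by simpa using hp)
  have h2M : ((2 * M : ℕ) : ℤ) ∈ Icc lo hi := hgrid ▸ (by simpa using hq)
  have hlohi : (0 : ℝ) < (hi - lo : ℤ) := by
    have : 0 < hi - lo := by have := h0.1; have := h2M.2; omega
    exact_mod_cast this
  have hgap := sq_mul_le_logConcavityGap (g := fun k : ℕ => Real.log (f (p + k * h))) (M := M)
    (δ := ((hi - lo : ℤ) : ℝ)⁻¹) fun k hk => by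
      have h := (hf.comp_add_intCast_mul p hh).inv_le_logConcavityGap hgrid (j := k)
        (by have := h0.1; omega) (by have := h2M.2; omega)
      simpa [logConcavityGap, sub_right_comm] using h
  have hδ : h / (B - A) ≤ ((hi - lo : ℤ) : ℝ)⁻¹ := by
    rw [div_le_iff₀ ((mul_pos hlohi hh).trans_le hwidth), inv_mul_eq_div, le_div_iff₀ hlohi]
    linarith
  calc M ^ 2 * (h / (B - A)) ≤ M ^ 2 * ((hi - lo : ℤ) : ℝ)⁻¹ := by gcongr
    _ ≤ _ := hgap
    _ = _ := by simp [logConcavityGap]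

/-- On a grid of `2 * M` steps between two points of the support, the gap at the midpoint is at
least of order `M`. -/
theorem subsingleton_support (hf : IsTNToeplitz f) (hsupp : Function.support f ⊆ Icc A B) :
    (Function.support f).Subsingleton := by
  intro p hp q hq
  by_contra hne
  wlog hpq : p < q generalizing p q
  · exact this hq hp (Ne.symm hne) ((not_lt.mp hpq).lt_of_ne' hne)
  have hAB : 0 < B - A := by linarith [(hsupp hp).1, (hsupp hq).2]
  have hgrid (M : ℕ) (hM : 0 < M) : M * ((q - p) / (2 * (B - A))) ≤
      logConcavityGap (f p) (f ((p + q) / 2)) (f q) := by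
    have : (0 : ℝ) < M := by exact_mod_cast hM
    have hmid : p + M * ((q - p) / (2 * M)) = (p + q) / 2 := by field_simp; ring
    have hend : p + (2 * M : ℕ) * ((q - p) / (2 * M)) = q := by push_cast; field_simp; ring
    have h := hf.sq_mul_div_le_logConcavityGap (h := (q - p) / (2 * M)) hsupp
      (div_pos (sub_pos.mpr hpq) (by positivity)) hM hp (by rwa [hend])
    rw [hmid, hend] at h
    convert h using 1
    field_simp
  have hδ : 0 < (q - p) / (2 * (B - A)) := div_pos (sub_pos.mpr hpq) (by positivity)
  obtain ⟨M, hM⟩ := exists_nat_gt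
    (logConcavityGap (f p) (f ((p + q) / 2)) (f q) / ((q - p) / (2 * (B - A))))
  rw [div_lt_iff₀ hδ] at hM
  have h := hgrid (M + 1) M.succ_pos
  push_cast at h
  linarith

theorem isUpperSet_or_isLowerSet_support (hf : IsTNToeplitz f)
    (hne : (Function.support f).Nontrivial) :
    IsUpperSet (Function.support f) ∨ IsLowerSet (Function.support f) := by
  by_cases habove : BddAbove (Function.support f)
  · refine Or.inr (isLowerSet_of_ordConnected_of_not_bddBelow hf.ordConnected_support ?_)
    rintro ⟨A, hA⟩
    obtain ⟨B, hB⟩ := habove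
    exact hne.not_subsingleton (hf.subsingleton_support fun x hx => ⟨hA hx, hB hx⟩)
  · exact Or.inl (isUpperSet_of_ordConnected_of_not_bddAbove hf.ordConnected_support habove)

end IsTNToeplitz

/-! ### Monotone log-concave functions -/

lemma continuous_of_monotone_of_sub_le_sub {L : ℝ → ℝ} (hL : Monotone L)
    (hconc : ∀ ⦃s t δ⦄, s ≤ t → 0 ≤ δ → L (t + δ) - L t ≤ L (s + δ) - L s) : Continuous L := by
  refine continuous_iff_continuousAt.2 fun x => ?_
  obtain ⟨s, hs, hsx⟩ := (hL.countable_not_continuousAt.dense_compl ℝ).exists_lt x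
  replace hs : ContinuousAt L s := not_not.1 hs
  have hdist (h : ℝ) : |L (x + h) - L x| ≤ |L (s + h) - L s| := by
    rcases le_total 0 h with h0 | h0
    · rw [abs_of_nonneg (sub_nonneg.2 (hL (le_add_of_nonneg_right h0))),
        abs_of_nonneg (sub_nonneg.2 (hL (le_add_of_nonneg_right h0)))]
      exact hconc hsx.le h0
    · rw [abs_of_nonpos (sub_nonpos.2 (hL (add_le_of_nonpos_right h0))),
        abs_of_nonpos (sub_nonpos.2 (hL (add_le_of_nonpos_right h0))), neg_sub, neg_sub]
      simpa using hconc (add_le_add_left hsx.le h) (neg_nonneg.2 h0)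
  have hlim : Tendsto (fun h => L (s + h) - L s) (𝓝 0) (𝓝 0) := by
    have hs' : ContinuousAt L (s + 0) := by rwa [add_zero]
    simpa using (hs'.tendsto.comp ((continuous_const_add s).tendsto 0)).sub_const (L s)
  have hlim' := (squeeze_zero_norm hdist (by simpa using hlim.abs)).add_const (L x)
  rw [ContinuousAt, ← map_add_left_nhds_zero, tendsto_map'_iff]
  simpa [Function.comp_def] using hlim'

lemma continuous_of_monotone_of_mul_le_mul {H : ℝ → ℝ} (hpos : ∀ x, 0 < H x) (hH : Monotone H)
    (hmul : ∀ ⦃u v v' w⦄, u < v → u < v' → v + v' = u + w → H u * H w ≤ H v * H v') :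
    Continuous H := by
  have hlog : Continuous fun x => Real.log (H x) := by
    refine continuous_of_monotone_of_sub_le_sub
      (fun x y hxy => Real.log_le_log (hpos x) (hH hxy)) fun s t δ hst hδ => ?_
    rcases hst.eq_or_lt with rfl | hst
    · exact le_rfl
    rcases hδ.eq_or_lt with rfl | hδ
    · simp
    have h := Real.log_le_log (mul_pos (hpos _) (hpos _))
      (hmul hst (lt_add_of_pos_right s hδ) (show t + (s + δ) = s + (t + δ) by ring))
    rw [Real.log_mul (hpos _).ne' (hpos _).ne', Real.log_mul (hpos _).ne' (hpos _).ne'] at h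
    linarith
  simpa [Real.exp_log (hpos _)] using hlog.rexp

lemma exists_forall_eq_mul_exp {H : ℝ → ℝ} (hpos : ∀ x, 0 < H x) (hH : Continuous H)
    (hadd : ∀ x y, H x * H y = H 0 * H (x + y)) : ∃ α, ∀ x, H x = H 0 * Real.exp (x * α) := by
  let A : ℝ →+ ℝ := AddMonoidHom.mk' (fun x => Real.log (H x) - Real.log (H 0)) fun x y => by
    have h := congrArg Real.log (hadd x y)
    rw [Real.log_mul (hpos _).ne' (hpos _).ne', Real.log_mul (hpos _).ne' (hpos _).ne'] at h
    linarith
  have hA : Continuous A := (hH.log fun x => (hpos x).ne').sub continuous_const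
  refine ⟨A 1, fun x => ?_⟩
  have hx : Real.log (H x) = Real.log (H 0) + x * A 1 := by
    have h : A x = x * A 1 := by simpa using map_real_smul A hA x 1
    rw [← h]
    exact (add_sub_cancel _ _).symm
  rw [← Real.exp_log (hpos x), hx, Real.exp_add, Real.exp_log (hpos 0)]

section Truncation

variable {H : ℝ → ℝ} (hTN : ∀ s, IsTNToeplitz ((Ici 0).indicator fun t => H (s - t)))
  (hpos : ∀ x, 0 < H x) (hH : Monotone H)
include hTN

lemma mul_le_mul_of_isTNToeplitz_indicator_Ici {u v v' w : ℝ} (hv : u < v) (hv' : u < v')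
    (h : v + v' = u + w) : H u * H w ≤ H v * H v' := by
  have hmul := (hTN w).mul_le_mul (u := 0) (v := w - v) (v' := w - v') (w := w - u)
    (by linarith) (by linarith) (by linarith)
  simp only [indicator_apply, mem_Ici, le_refl, if_true, if_pos (show 0 ≤ w - u by linarith),
    if_pos (show 0 ≤ w - v by linarith), if_pos (show 0 ≤ w - v' by linarith), sub_sub_cancel,
    sub_zero] at hmul
  rwa [mul_comm]

lemma mul_sub_mul_nonneg_of_isTNToeplitz_indicator_Ici {p q c δ : ℝ} (hqp : q < p) (hc : 0 < c)
    (hδ : 0 < δ) (hδ1 : δ < 1) :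
    0 ≤ H (p + 1 - c) * (H p * H (q + δ) - H (p + δ) * H q) -
      H (p + 1) * (H (p - c) * H (q + δ) - H (p + δ) * H (q - c)) := by
  have hminor := IsTNKernel.minor_three_nonneg (hTN (p + 1)) (x₀ := 0) (x₁ := 1)
    (x₂ := 1 + p - q) (y₀ := -c) (y₁ := 0) (y₂ := δ) (by norm_num) (by linarith) (by linarith) hδ
  have hin {r s : ℝ} (hr : r ≤ p + 1) (h : p + 1 - s = r) :
      (Ici 0).indicator (fun t => H (p + 1 - t)) s = H r := by
    rw [indicator_of_mem (mem_Ici.2 (by linarith)), h]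
  rw [hin (s := 0 - -c) (r := p + 1 - c) (by linarith) (by ring),
    hin (s := 0 - 0) (r := p + 1) le_rfl (by ring),
    indicator_of_notMem (a := 0 - δ) (by simpa using hδ),
    hin (s := 1 - -c) (r := p - c) (by linarith) (by ring),
    hin (s := 1 - 0) (r := p) (by linarith) (by ring),
    hin (s := 1 - δ) (r := p + δ) (by linarith) (by ring),
    hin (s := 1 + p - q - -c) (r := q - c) (by linarith) (by ring),
    hin (s := 1 + p - q - 0) (r := q) (by linarith) (by ring),
    hin (s := 1 + p - q - δ) (r := q + δ) (by linarith) (by ring)] at hminor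
  linarith

include hpos hH

lemma mul_eq_mul_of_isTNToeplitz_indicator_Ici {p q c : ℝ} (hqp : q < p) (hc : 0 < c) :
    H (p - c) * H q = H p * H (q - c) := by
  have hcont := continuous_of_monotone_of_mul_le_mul hpos hH
    fun _ _ _ _ => mul_le_mul_of_isTNToeplitz_indicator_Ici hTN
  refine le_antisymm ?_ ?_
  · have hlim : Tendsto (fun δ => H (p + 1 - c) * (H p * H (q + δ) - H (p + δ) * H q) -
        H (p + 1) * (H (p - c) * H (q + δ) - H (p + δ) * H (q - c))) (𝓝[>] 0)
        (𝓝 (H (p + 1) * (H p * H (q - c) - H (p - c) * H q))) :=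
      ((Continuous.tendsto' (by fun_prop) 0 _ (by simp only [add_zero]; ring))).mono_left
        nhdsWithin_le_nhds
    have h := ge_of_tendsto hlim (by
      filter_upwards [Ioo_mem_nhdsGT one_pos] with δ hδ
      exact mul_sub_mul_nonneg_of_isTNToeplitz_indicator_Ici hTN hqp hc hδ.1 hδ.2)
    exact sub_nonneg.1 (nonneg_of_mul_nonneg_right h (hpos _))
  · rw [mul_comm (H p)]
    exact mul_le_mul_of_isTNToeplitz_indicator_Ici hTN (sub_lt_sub_right hqp c)
      (sub_lt_self q hc) (by ring)

lemma exists_eq_mul_exp_of_isTNToeplitz_indicator_Ici :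
    ∃ α, 0 ≤ α ∧ ∀ x, H x = H 0 * Real.exp (x * α) := by
  have hmul (p q c : ℝ) : H (p - c) * H q = H p * H (q - c) := by
    wlog hc : 0 < c generalizing p q c
    · rcases (not_lt.1 hc).eq_or_lt with rfl | hc
      · simp
      · simpa using (this (p - c) (q - c) (-c) (neg_pos.2 hc)).symm
    rcases lt_trichotomy q p with h | rfl | h
    · exact mul_eq_mul_of_isTNToeplitz_indicator_Ici hTN hpos hH h hc
    · exact mul_comm _ _
    · linarith [mul_eq_mul_of_isTNToeplitz_indicator_Ici hTN hpos hH h hc]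
  obtain ⟨α, hα⟩ := exists_forall_eq_mul_exp hpos (continuous_of_monotone_of_mul_le_mul hpos hH
    fun _ _ _ _ => mul_le_mul_of_isTNToeplitz_indicator_Ici hTN) fun x y => by
      simpa [mul_comm (H x)] using hmul 0 x (-y)
  refine ⟨α, ?_, hα⟩
  have h := hα 1 ▸ hH zero_le_one
  simpa using (le_mul_iff_one_le_right (hpos 0)).1 h

end Truncation

/-! ### Functions preserving Pólya frequency functions -/

/-- `F ∘ Λ` has a totally non-negative Toeplitz kernel for every Pólya frequency function `Λ`. -/
def PreservesPolyaFrequency (F : ℝ → ℝ) : Prop :=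
  ∀ Λ : ℝ → ℝ, IsPolyaFrequencyFunction Λ → IsTNToeplitz (F ∘ Λ)

namespace PreservesPolyaFrequency

variable {F : ℝ → ℝ}

lemma monotoneOn (hF : PreservesPolyaFrequency F) (hF0 : ∀ x, 0 ≤ x → 0 ≤ F x) :
    MonotoneOn F (Ioi 0) := by
  intro s hs t ht hst
  rcases hst.eq_or_lt with rfl | hst
  · exact le_rfl
  have hs : 0 < s := hs
  have ht : 0 < t := ht
  have hlog : 0 < Real.log (t / s) := Real.log_pos ((one_lt_div hs).2 hst)
  have hexp : t * Real.exp (-Real.log (t / s)) = s := by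
    rw [← Real.log_inv, Real.exp_log (by positivity), inv_div, mul_div_cancel₀ _ ht.ne']
  have h := (hF _ (IsPolyaFrequencyFunction.exp_neg_abs.const_mul ht)).mul_le_mul
    (neg_neg_of_pos hlog) (neg_neg_of_pos hlog) (show 0 + 0 = _ + Real.log (t / s) by ring)
  simp only [Function.comp_apply, abs_neg, abs_of_pos hlog, hexp, abs_zero, neg_zero,
    Real.exp_zero, mul_one] at h
  exact (mul_self_le_mul_self_iff (hF0 s hs.le) (hF0 t ht.le)).2 h

lemma pos_of_pos (hF : PreservesPolyaFrequency F) (hF0 : ∀ x, 0 ≤ x → 0 ≤ F x) {s t : ℝ}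
    (hs : 0 < s) (hFs : 0 < F s) (ht : 0 < t) : 0 < F t := by
  have hmono := hF.monotoneOn hF0
  refine (hF0 t ht.le).lt_of_ne' fun hFt => ?_
  have hsupp : Function.support (F ∘ fun x => 2 * s * Real.exp (-|x|)) ⊆
      Icc (Real.log (t / (2 * s))) (-Real.log (t / (2 * s))) := by
    intro x hx
    by_contra hout
    refine hx (le_antisymm (hFt ▸ hmono (mem_Ioi.2 (by positivity)) ht ?_) (hF0 _ (by positivity)))
    have habs : -|x| ≤ Real.log (t / (2 * s)) := by
      by_contra! h
      exact hout ⟨(h.trans_le (neg_abs_le x)).le, (le_abs_self x).trans (by linarith)⟩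
    rwa [Real.le_log_iff_exp_le (by positivity), le_div_iff₀' (by positivity)] at habs
  have hlog := Real.log_pos one_lt_two
  refine hlog.ne ((hF _ (IsPolyaFrequencyFunction.exp_neg_abs.const_mul
    (by positivity))).subsingleton_support hsupp (ne_of_gt ?_) (ne_of_gt ?_))
  · simpa using hFs.trans_le (hmono hs (mem_Ioi.2 (by positivity)) (by linarith))
  · have hs2 : 2 * s * Real.exp (-Real.log 2) = s := by
      rw [Real.exp_neg, Real.exp_log two_pos, mul_right_comm, mul_inv_cancel₀ two_ne_zero, one_mul]
    simpa [abs_of_pos hlog, hs2] using hFs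

lemma comp_indicator_Ici (hF : PreservesPolyaFrequency F) {c : ℝ} (hc : 0 < c) :
    IsTNToeplitz fun x => F ((Ici 0).indicator (fun x => c * Real.exp (-x)) x) := by
  simpa only [Function.comp_def, ← indicator_const_mul] using
    hF _ (IsPolyaFrequencyFunction.exp_Ici.const_mul hc)

lemma eq_apply_zero (hF : PreservesPolyaFrequency F) (h0 : 0 < F 0) (hpos : ∀ x, 0 < x → 0 < F x)
    {c : ℝ} (hc : 0 < c) : F c = F 0 := by
  set G : ℝ → ℝ := fun x => F ((Ici 0).indicator (fun x => c * Real.exp (-x)) (-x)) with hG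
  have hTN : IsTNToeplitz G := (hF.comp_indicator_Ici hc).comp_neg
  have hG0 : ∀ x, 0 < x → G x = F 0 := fun x hx => by simp [hG, hx]
  have hGpos (x : ℝ) : 0 < G x := by
    rcases lt_or_ge 0 x with hx | hx
    · rwa [hG0 x hx]
    · simpa [hG, hx] using hpos _ (mul_pos hc (Real.exp_pos x))
  have hmono : Monotone G := by
    intro x y hxy
    rcases hxy.eq_or_lt with rfl | hxy
    · exact le_rfl
    set r := |x| + |y| + 1
    have hr := hTN.mul_le_mul (u := x) (v := y) (v' := r + x) (w := r + y) hxy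
      (lt_add_of_pos_left x (by positivity)) (by ring)
    rw [hG0 (r + y) (by linarith [neg_abs_le y, abs_nonneg x]),
      hG0 (r + x) (by linarith [neg_abs_le x, abs_nonneg y])] at hr
    exact le_of_mul_le_mul_right hr h0
  have hcont := continuous_of_monotone_of_mul_le_mul hGpos hmono fun _ _ _ _ => hTN.mul_le_mul
  have hlim : Tendsto G (𝓝[>] 0) (𝓝 (F 0)) :=
    tendsto_const_nhds.congr' (by
      filter_upwards [self_mem_nhdsWithin] with x hx using (hG0 x hx).symm)
  have hG00 : G 0 = F c := by simp [hG]
  exact hG00 ▸ tendsto_nhds_unique (hcont.continuousWithinAt (s := Ioi 0) (x := 0)) hlim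

lemma exists_eq_mul_rpow (hF : PreservesPolyaFrequency F) (h0 : F 0 = 0)
    (hpos : ∀ x, 0 < x → 0 < F x) (hmono : MonotoneOn F (Ioi 0)) :
    ∃ c α : ℝ, 0 < c ∧ 0 ≤ α ∧ ∀ x, 0 < x → F x = c * x ^ α := by
  have hTN (s : ℝ) : IsTNToeplitz ((Ici 0).indicator fun t => F (Real.exp (s - t))) := by
    refine (congrArg IsTNToeplitz (funext fun x => ?_)).mpr (hF.comp_indicator_Ici (Real.exp_pos s))
    by_cases hx : 0 ≤ x
    · simp [hx, ← Real.exp_add, sub_eq_add_neg]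
    · simp [hx, h0]
  obtain ⟨α, hα, hexp⟩ := exists_eq_mul_exp_of_isTNToeplitz_indicator_Ici
    (H := fun s => F (Real.exp s)) hTN (fun s => hpos _ (Real.exp_pos s)) fun s t hst =>
      hmono (Real.exp_pos s) (Real.exp_pos t) (Real.exp_le_exp.2 hst)
  refine ⟨F (Real.exp 0), α, hpos _ (Real.exp_pos 0), hα, fun x hx => ?_⟩
  rw [Real.rpow_def_of_pos hx, ← hexp, Real.exp_log hx]

end PreservesPolyaFrequency

/-! ### Small minors of a multiplicative kernel -/

section SmallMinors

variable {φ : ℝ → ℝ} {m : ℕ}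

lemma tendsto_comp_mul_div_pow {r : ℝ → ℝ} (hr : r =o[𝓝 0] fun w => w ^ m) (k : ℝ) :
    Tendsto (fun t => r (t * k) / t ^ m) (𝓝[≠] 0) (𝓝 0) := by
  have hk : Tendsto (fun t : ℝ => t * k) (𝓝[≠] 0) (𝓝 0) :=
    ((continuous_mul_const k).tendsto' 0 0 (zero_mul k)).mono_left nhdsWithin_le_nhds
  refine ((hr.comp_tendsto hk).trans_isBigO ?_).tendsto_div_nhds_zero
  simpa only [Function.comp_def, mul_pow, mul_comm] using
    (Asymptotics.isBigO_refl (fun t : ℝ => t ^ m) _).const_mul_left (k ^ m)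

section Factorization

variable {ι : Type*} [Fintype ι] [DecidableEq ι] {e : ι → ℕ} {d : ι → ℝ} (he : ∀ l, e l ≤ m)
  {μ ν : ι → ℝ} (hμ : IsUnit (Matrix.of fun i l => μ i ^ e l).det)
  (hν : IsUnit (Matrix.of fun l j => ν j ^ e l).det)
include he hμ hν

lemma det_sum_mul_pow_add_smul (t : ℝ) (R : Matrix ι ι ℝ) :
    ((Matrix.of fun i j => ∑ l, d l * (t * (μ i * ν j)) ^ e l) + t ^ m • R).det =
      (∏ l, t ^ e l) * ((Matrix.of fun i l => μ i ^ e l).det *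
        (Matrix.diagonal d + Matrix.diagonal (fun l => t ^ (m - e l)) *
          ((Matrix.of fun i l => μ i ^ e l)⁻¹ * R * (Matrix.of fun l j => ν j ^ e l)⁻¹)).det *
        (Matrix.of fun l j => ν j ^ e l).det) := by
  set V := Matrix.of fun i l => μ i ^ e l
  set W := Matrix.of fun l j => ν j ^ e l
  have hpow : Matrix.diagonal (fun l => t ^ e l) * Matrix.diagonal (fun l => t ^ (m - e l)) =
      t ^ m • (1 : Matrix ι ι ℝ) := by
    simp only [Matrix.diagonal_mul_diagonal, Matrix.smul_one_eq_diagonal, ← pow_add,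
      Nat.add_sub_cancel' (he _)]
  have hcancel : V * (V⁻¹ * R * W⁻¹) * W = R := by
    rw [mul_assoc V⁻¹, Matrix.mul_nonsing_inv_cancel_left _ _ hμ, mul_assoc,
      Matrix.nonsing_inv_mul _ hν, mul_one]
  have hsum : (Matrix.of fun i j => ∑ l, d l * (t * (μ i * ν j)) ^ e l) =
      V * (Matrix.diagonal (fun l => t ^ e l) * Matrix.diagonal d) * W := by
    ext i j
    simp only [Matrix.diagonal_mul_diagonal, Matrix.mul_apply (N := W), Matrix.mul_diagonal,
      Matrix.of_apply, V, W]
    exact Finset.sum_congr rfl fun l _ => by ring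
  have hfactor : (Matrix.of fun i j => ∑ l, d l * (t * (μ i * ν j)) ^ e l) + t ^ m • R =
      V * (Matrix.diagonal (fun l => t ^ e l) * (Matrix.diagonal d +
        Matrix.diagonal (fun l => t ^ (m - e l)) * (V⁻¹ * R * W⁻¹))) * W := by
    rw [mul_add, ← mul_assoc (Matrix.diagonal _) (Matrix.diagonal _), hpow, mul_add, add_mul,
      smul_mul_assoc, one_mul, mul_smul_comm, smul_mul_assoc, hcancel, hsum]
  rw [hfactor, Matrix.det_mul, Matrix.det_mul, Matrix.det_mul, Matrix.det_diagonal]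
  ring

lemma tendsto_det_div_prod_pow
    (hφ : (fun w => φ w - ∑ l, d l * w ^ e l) =o[𝓝 0] fun w => w ^ m) :
    Tendsto (fun t => (Matrix.of fun i j => φ (t * (μ i * ν j))).det / ∏ l, t ^ e l) (𝓝[≠] 0)
      (𝓝 ((Matrix.of fun i l => μ i ^ e l).det * (∏ l, d l) *
        (Matrix.of fun l j => ν j ^ e l).det)) := by
  let R : ℝ → Matrix ι ι ℝ := fun t => Matrix.of fun i j =>
    (φ (t * (μ i * ν j)) - ∑ l, d l * (t * (μ i * ν j)) ^ e l) / t ^ m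
  have hR : Tendsto R (𝓝[≠] 0) (𝓝 0) := tendsto_pi_nhds.2 fun i => tendsto_pi_nhds.2 fun j =>
    tendsto_comp_mul_div_pow hφ (μ i * ν j)
  have hid : Tendsto (fun t : ℝ => t) (𝓝[≠] 0) (𝓝 0) := tendsto_id'.2 nhdsWithin_le_nhds
  have hcont : Continuous fun P : ℝ × Matrix ι ι ℝ => (Matrix.of fun i l => μ i ^ e l).det *
      (Matrix.diagonal d + Matrix.diagonal (fun l => P.1 ^ (m - e l)) *
        ((Matrix.of fun i l => μ i ^ e l)⁻¹ * P.2 * (Matrix.of fun l j => ν j ^ e l)⁻¹)).det *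
      (Matrix.of fun l j => ν j ^ e l).det := by fun_prop
  refine ((hcont.tendsto' (0, 0) _ (by simp)).comp (hid.prodMk_nhds hR)).congr' ?_
  filter_upwards [self_mem_nhdsWithin] with t ht
  have hsplit : (Matrix.of fun i j => φ (t * (μ i * ν j))) =
      (Matrix.of fun i j => ∑ l, d l * (t * (μ i * ν j)) ^ e l) + t ^ m • R t := by
    ext i j
    simp [R, mul_div_cancel₀ _ (pow_ne_zero m ht)]
  rw [hsplit, det_sum_mul_pow_add_smul he hμ hν, mul_div_cancel_left₀ _
    (Finset.prod_ne_zero_iff.2 fun l _ => pow_ne_zero _ ht), Function.comp_apply]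

end Factorization

lemma IsTNToeplitz.det_exp_neg_nonneg {f : ℝ → ℝ} (hf : IsTNToeplitz f)
    (hφ : ∀ x, 0 < x → f x = φ (Real.exp (-x))) {n : ℕ} {μ ν : Fin n → ℝ} (hμ0 : ∀ i, 0 < μ i)
    (hν0 : ∀ j, 0 < ν j) (hμ : StrictAnti μ) (hν : StrictMono ν) (hμν : ∀ i j, μ i * ν j < 1) :
    0 ≤ (Matrix.of fun i j => φ (μ i * ν j)).det := by
  have h := hf n (fun i => -Real.log (μ i)) (fun j => Real.log (ν j))
    (fun i j hij => neg_lt_neg (Real.log_lt_log (hμ0 j) (hμ hij)))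
    fun i j hij => Real.log_lt_log (hν0 i) (hν hij)
  refine h.trans_eq (congrArg Matrix.det (Matrix.ext fun i j => ?_))
  have hlog : -Real.log (μ i) - Real.log (ν j) = -Real.log (μ i * ν j) := by
    rw [Real.log_mul (hμ0 i).ne' (hν0 j).ne']
    ring
  have hμν0 := mul_pos (hμ0 i) (hν0 j)
  simp only [Matrix.of_apply]
  rw [hlog, hφ _ (neg_pos.2 (Real.log_neg hμν0 (hμν i j))), neg_neg, Real.exp_log hμν0]

/-- At the points `2 ^ j` the generalized Vandermonde matrix with exponents `e` is the transpose of
an ordinary one with nodes `2 ^ e l`; reversing the rows contributes the sign. -/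
lemma IsTNToeplitz.sign_revPerm_mul_prod_nonneg {f : ℝ → ℝ} (hf : IsTNToeplitz f)
    (hφ : ∀ x, 0 < x → f x = φ (Real.exp (-x))) {n : ℕ} {e : Fin n → ℕ} {d : Fin n → ℝ}
    (he : Function.Injective e) (hem : ∀ l, e l ≤ m)
    (hexp : (fun w => φ w - ∑ l, d l * w ^ e l) =o[𝓝 0] fun w => w ^ m) :
    0 ≤ ((Equiv.Perm.sign (Fin.revPerm : Equiv.Perm (Fin n)) : ℤ) : ℝ) * ∏ l, d l := by
  set ν : Fin n → ℝ := fun j => 2 ^ (j : ℕ) with hν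
  have hν0 (j : Fin n) : 0 < ν j := by positivity
  have hνmono : StrictMono ν := (pow_right_strictMono₀ one_lt_two).comp Fin.val_strictMono
  have hdet : (Matrix.of fun l j => ν j ^ e l).det ≠ 0 := by
    have hvand : (Matrix.of fun l j => ν j ^ e l) = Matrix.vandermonde fun l => 2 ^ e l := by
      ext l j
      simp [hν, Matrix.vandermonde_apply, pow_right_comm]
    rw [hvand, Matrix.det_vandermonde_ne_zero_iff]
    exact (pow_right_injective₀ two_pos (by norm_num)).comp he
  have hrev : (Matrix.of fun i l => ν (Fin.rev i) ^ e l).det =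
      (Equiv.Perm.sign (Fin.revPerm : Equiv.Perm (Fin n)) : ℤ) *
        (Matrix.of fun l j => ν j ^ e l).det := by
    rw [← Matrix.det_transpose (Matrix.of fun l j => ν j ^ e l), ← Matrix.det_permute]
    rfl
  have hlim := tendsto_det_div_prod_pow hem (μ := fun i => ν (Fin.rev i)) (ν := ν)
    (by rw [hrev]; simpa [isUnit_iff_ne_zero] using hdet) hdet.isUnit hexp
  have hsmall : ∀ᶠ t in 𝓝[>] (0 : ℝ), ∀ i j, t * ν (Fin.rev i) * ν j < 1 := by
    refine eventually_all.2 fun i => eventually_all.2 fun j => ?_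
    exact ((show Continuous fun t => t * ν (Fin.rev i) * ν j by fun_prop).tendsto' 0 0
      (by simp)).mono_left nhdsWithin_le_nhds |>.eventually_lt_const one_pos
  have h := ge_of_tendsto (hlim.mono_left (nhdsGT_le_nhdsNE 0)) (b := 0) <| by
    filter_upwards [hsmall, self_mem_nhdsWithin] with t ht (ht0 : 0 < t)
    have hminor := hf.det_exp_neg_nonneg hφ (fun i => mul_pos ht0 (hν0 (Fin.rev i))) hν0
      (fun i j hij => by gcongr; exact hνmono (Fin.rev_lt_rev.2 hij)) hνmono ht
    simp only [mul_assoc] at hminor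
    positivity
  rw [hrev] at h
  exact nonneg_of_mul_nonneg_left (by linarith) (mul_self_pos.2 hdet)

end SmallMinors

/-! ### The exponent of a preserver -/

lemma one_add_rpow_sub_isBigO (α : ℝ) :
    (fun u : ℝ => (1 + u) ^ α - (1 + α * u + α * (α - 1) / 2 * u ^ 2)) =O[𝓝 0]
      fun u => u ^ 3 := by
  have hchoose : Ring.choose α 2 = α * (α - 1) / 2 := by
    have h := Ring.descPochhammer_eq_factorial_smul_choose α 2
    simp only [descPochhammer_succ_left, descPochhammer_zero, Polynomial.one_comp, mul_one,
      Polynomial.X_comp, Polynomial.smeval_mul, Polynomial.smeval_sub, Polynomial.smeval_X,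
      Polynomial.smeval_one, pow_one, pow_zero, one_smul, Nat.factorial, nsmul_eq_mul] at h
    push_cast at h
    linarith
  have h := (Real.one_add_rpow_hasFPowerSeriesAt_zero (a := α)).isBigO_sub_partialSum_pow 3
  have hpartial (u : ℝ) : (binomialSeries ℝ α).partialSum 3 u =
      1 + α * u + α * (α - 1) / 2 * u ^ 2 := by
    simp only [FormalMultilinearSeries.partialSum, Finset.sum_range_succ, Finset.sum_range_zero,
      binomialSeries_apply, Ring.choose_zero_right, Ring.choose_one_right, hchoose, pow_zero,
      pow_one, smul_eq_mul, zero_add, List.prod_ofFn, Fin.prod_const]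
    ring
  simp only [zero_add, hpartial, ← norm_pow] at h
  exact h.of_norm_right

lemma one_sub_rpow_sub_isLittleO (α : ℝ) : (fun w : ℝ => (1 - w) ^ α -
    ∑ l, ![1, -α, α * (α - 1) / 2] l * w ^ (![0, 1, 2] : Fin 3 → ℕ) l) =o[𝓝 0]
      fun w => w ^ 2 := by
  have hneg : Tendsto (fun w : ℝ => -w) (𝓝 0) (𝓝 0) := continuous_neg.tendsto' 0 0 neg_zero
  have hcube : (fun w : ℝ => (-w) ^ 3) =o[𝓝 0] fun w => w ^ 2 := by
    simpa only [Odd.neg_pow (⟨1, rfl⟩ : Odd 3), Asymptotics.isLittleO_neg_left] using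
      Asymptotics.isLittleO_pow_pow (𝕜 := ℝ) (show 2 < 3 by norm_num)
  refine (((one_add_rpow_sub_isBigO α).comp_tendsto hneg).trans_isLittleO hcube).congr_left
    fun w => ?_
  simp [Fin.sum_univ_three, ← sub_eq_add_neg]

lemma pow_mul_isLittleO_pow {g : ℝ → ℝ} (hg : Continuous g) {m n : ℕ} (hmn : m < n) :
    (fun w => w ^ n * g w) =o[𝓝 0] fun w => w ^ m := by
  simpa using (Asymptotics.isLittleO_pow_pow hmn).mul_isBigO ((hg.tendsto 0).isBigO_one ℝ)

lemma one_sub_sq_mul_rpow_sub_isLittleO (α : ℝ) :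
    (fun w : ℝ => ((1 - w) ^ 2 * (1 + 2 * w)) ^ α -
      ∑ l, ![1, -(3 * α), 2 * α, 9 / 2 * α * (α - 1)] l *
        w ^ (![0, 2, 3, 4] : Fin 4 → ℕ) l) =o[𝓝 0] fun w => w ^ 4 := by
  have hu : Tendsto (fun w : ℝ => -3 * w ^ 2 + 2 * w ^ 3) (𝓝 0) (𝓝 0) :=
    Continuous.tendsto' (by fun_prop) _ _ (by norm_num)
  have hcube : (fun w : ℝ => (-3 * w ^ 2 + 2 * w ^ 3) ^ 3) =o[𝓝 0] fun w => w ^ 4 :=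
    (pow_mul_isLittleO_pow (g := fun w => w * (-3 + 2 * w) ^ 3) (by fun_prop)
      (show 4 < 5 by norm_num)).congr_left fun w => by ring
  have hrest := pow_mul_isLittleO_pow (g := fun w => α * (α - 1) / 2 * (-12 + 4 * w)) (by fun_prop)
    (show 4 < 5 by norm_num)
  refine ((((one_add_rpow_sub_isBigO α).comp_tendsto hu).trans_isLittleO hcube).add
    hrest).congr_left fun w => ?_
  have hbase : 1 + (-3 * w ^ 2 + 2 * w ^ 3) = (1 - w) ^ 2 * (1 + 2 * w) := by ring
  simp only [Function.comp_apply, hbase, Fin.sum_univ_four, Matrix.cons_val]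
  ring

namespace PreservesPolyaFrequency

variable {F : ℝ → ℝ} {c α : ℝ}

lemma exists_isTNToeplitz_eq_rpow (hF : PreservesPolyaFrequency F) (hc : 0 < c)
    (hpow : ∀ x, 0 < x → F x = c * x ^ α) {ψ : ℝ → ℝ} (hψ : ∀ w, 0 < w → w < 1 → 0 < ψ w) {k : ℕ}
    (hΛ : IsPolyaFrequencyFunction
      ((Ici 0).indicator fun x => Real.exp (-x) ^ k * ψ (Real.exp (-x)))) :
    ∃ f : ℝ → ℝ, IsTNToeplitz f ∧ ∀ x, 0 < x → f x = ψ (Real.exp (-x)) ^ α := by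
  refine ⟨_, ((hF _ hΛ).const_mul (inv_nonneg.2 hc.le)).exp_mul (k * α), fun x hx => ?_⟩
  have hψx := hψ _ (Real.exp_pos (-x)) (exp_neg_lt_one hx)
  have hexp : (Real.exp (-x) ^ k) ^ α = (Real.exp (k * α * x))⁻¹ := by
    rw [← Real.exp_nat_mul, ← Real.exp_mul, ← Real.exp_neg]
    ring_nf
  simp only [Function.comp_apply, indicator_of_mem (mem_Ici.2 hx.le)]
  rw [hpow _ (by positivity), Real.mul_rpow (by positivity) hψx.le, hexp,
    inv_mul_cancel_left₀ hc.ne', mul_inv_cancel_left₀ (Real.exp_pos _).ne']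

lemma one_le_exponent (hF : PreservesPolyaFrequency F) (hc : 0 < c) (hα : 0 < α)
    (hpow : ∀ x, 0 < x → F x = c * x ^ α) : 1 ≤ α := by
  obtain ⟨f, hf, hfα⟩ := hF.exists_isTNToeplitz_eq_rpow hc hpow (ψ := fun w => 1 - w)
    (fun w _ hw => sub_pos.2 hw) IsPolyaFrequencyFunction.exp_pow_three_mul_Ici
  have h := hf.sign_revPerm_mul_prod_nonneg (φ := fun w => (1 - w) ^ α) hfα (by decide) (by decide)
    (one_sub_rpow_sub_isLittleO α)
  have hsign : Equiv.Perm.sign (Fin.revPerm : Equiv.Perm (Fin 3)) = -1 := by decide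
  have hcoeff : 0 ≤ α ^ 2 / 2 * (α - 1) := by
    simp only [hsign, Fin.prod_univ_three, Matrix.cons_val, Units.val_neg, Units.val_one,
      Int.cast_neg, Int.cast_one] at h
    linarith
  exact sub_nonneg.1 (nonneg_of_mul_nonneg_right hcoeff (by positivity))

lemma exponent_le_one (hF : PreservesPolyaFrequency F) (hc : 0 < c) (hα : 0 < α)
    (hpow : ∀ x, 0 < x → F x = c * x ^ α) : α ≤ 1 := by
  obtain ⟨f, hf, hfα⟩ := hF.exists_isTNToeplitz_eq_rpow hc hpow (k := 1)
    (ψ := fun w => (1 - w) ^ 2 * (1 + 2 * w))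
    (fun w hw hw1 => have := sub_pos.2 hw1; by positivity)
    (by simpa only [pow_one] using IsPolyaFrequencyFunction.exp_mul_one_sub_sq_Ici)
  have h := hf.sign_revPerm_mul_prod_nonneg (φ := fun w => ((1 - w) ^ 2 * (1 + 2 * w)) ^ α) hfα
    (by decide) (by decide) (one_sub_sq_mul_rpow_sub_isLittleO α)
  have hsign : Equiv.Perm.sign (Fin.revPerm : Equiv.Perm (Fin 4)) = 1 := by decide
  have hcoeff : 0 ≤ 27 * α ^ 3 * (1 - α) := by
    simp only [hsign, Fin.prod_univ_four, Matrix.cons_val, Units.val_one, Int.cast_one] at h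
    linarith
  exact sub_nonneg.1 (nonneg_of_mul_nonneg_right hcoeff (by positivity))

end PreservesPolyaFrequency

/-! ### Classification of the preservers -/

namespace PreservesPolyaFrequency

variable {F : ℝ → ℝ}

lemma eq_mul_or_eq_step (hF : PreservesPolyaFrequency F) (hF0 : ∀ x, 0 ≤ x → 0 ≤ F x)
    (h0 : F 0 = 0) (hpos : ∀ x, 0 < x → 0 < F x) :
    ∃ c : ℝ, 0 < c ∧
      ((∀ x, 0 ≤ x → F x = c * x) ∨ (∀ x, 0 ≤ x → F x = if 0 < x then c else 0)) := by
  obtain ⟨c, α, hc, hα, hpow⟩ := hF.exists_eq_mul_rpow h0 hpos (hF.monotoneOn hF0)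
  refine ⟨c, hc, ?_⟩
  rcases hα.eq_or_lt with rfl | hα
  · refine Or.inr fun x hx => ?_
    rcases hx.eq_or_lt with rfl | hx <;> simp [*]
  · obtain rfl := le_antisymm (hF.exponent_le_one hc hα hpow) (hF.one_le_exponent hc hα hpow)
    refine Or.inl fun x hx => ?_
    rcases hx.eq_or_lt with rfl | hx <;> simp [*]

lemma eq_const_or_mul_or_step_or_single_zero (hF : PreservesPolyaFrequency F)
    (hF0 : ∀ x, 0 ≤ x → 0 ≤ F x) (hne : ∃ x, 0 ≤ x ∧ F x ≠ 0) :
    ∃ c : ℝ, 0 < c ∧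
      ((∀ x, 0 ≤ x → F x = c) ∨ (∀ x, 0 ≤ x → F x = c * x) ∨
        (∀ x, 0 ≤ x → F x = if 0 < x then c else 0) ∨
        (∀ x, 0 ≤ x → F x = if x = 0 then c else 0)) := by
  by_cases hzero : ∀ x, 0 < x → F x = 0
  · obtain ⟨y, hy, hFy⟩ := hne
    obtain rfl : 0 = y := hy.eq_or_lt.resolve_right fun hy => hFy (hzero y hy)
    refine ⟨F 0, (hF0 0 hy).lt_of_ne' hFy, .inr (.inr (.inr fun x hx => ?_))⟩
    rcases hx.eq_or_lt with rfl | hx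
    · rw [if_pos rfl]
    · rw [if_neg hx.ne', hzero x hx]
  · push Not at hzero
    obtain ⟨s, hs, hFs⟩ := hzero
    have hpos (x : ℝ) (hx : 0 < x) : 0 < F x :=
      hF.pos_of_pos hF0 hs ((hF0 s hs.le).lt_of_ne' hFs) hx
    rcases (hF0 0 le_rfl).eq_or_lt with h0 | h0
    · obtain ⟨c, hc, h | h⟩ := hF.eq_mul_or_eq_step hF0 h0.symm hpos
      exacts [⟨c, hc, .inr (.inl h)⟩, ⟨c, hc, .inr (.inr (.inl h))⟩]
    · refine ⟨F 0, h0, .inl fun x hx => ?_⟩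
      rcases hx.eq_or_lt with rfl | hx
      · rfl
      · exact hF.eq_apply_zero h0 hpos hx

end PreservesPolyaFrequency

namespace IsTNFun

variable {F G f : ℝ → ℝ} {c : ℝ}

lemma isTNToeplitz (hf : IsTNFun f) : IsTNToeplitz f := hf.2

lemma const_mul (hf : IsTNFun f) (hc : 0 ≤ c) : IsTNFun fun x => c * f x :=
  ⟨hf.1.const_mul c, hf.isTNToeplitz.const_mul hc⟩

lemma indicator_const {A : Set ℝ} (hA : IsUpperSet A ∨ IsLowerSet A) (hc : 0 ≤ c) :
    IsTNFun (A.indicator fun _ => c) := by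
  have hone : IsTNFun (A.indicator 1) := by
    rcases hA with hA | hA
    · exact ⟨measurable_one.indicator hA.ordConnected.measurableSet,
        IsTNToeplitz.indicator_of_isUpperSet hA⟩
    · exact ⟨measurable_one.indicator hA.ordConnected.measurableSet,
        IsTNToeplitz.indicator_of_isLowerSet hA⟩
  simpa [← indicator_const_mul] using hone.const_mul hc

lemma indicator_support_const (hf : IsTNFun f) (hc : 0 ≤ c) :
    IsTNFun ((Function.support f).indicator fun _ => c) := by
  rcases (Function.support f).subsingleton_or_nontrivial with hsub | hnontriv
  · obtain ⟨d, hd, hdf⟩ : ∃ d, 0 ≤ d ∧ ∀ x ∈ Function.support f, d * f x = c := by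
      rcases hsub.eq_empty_or_singleton with h | ⟨p, h⟩
      · exact ⟨0, le_rfl, by simp [h]⟩
      · have hp : f p ≠ 0 := by simp [← Function.mem_support, h]
        refine ⟨c / f p, div_nonneg hc (hf.isTNToeplitz.nonneg p), ?_⟩
        simp [h, hp]
    convert hf.const_mul hd using 1
    ext x
    by_cases hx : x ∈ Function.support f
    · rw [indicator_of_mem hx, hdf x hx]
    · rw [indicator_of_notMem hx, Function.notMem_support.1 hx, mul_zero]
  · exact indicator_const (hf.isTNToeplitz.isUpperSet_or_isLowerSet_support hnontriv) hc

lemma indicator_compl_support_const (hf : IsTNFun f) (hsupp : (Function.support f).Nontrivial)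
    (hc : 0 ≤ c) : IsTNFun ((Function.support f)ᶜ.indicator fun _ => c) :=
  indicator_const ((hf.isTNToeplitz.isUpperSet_or_isLowerSet_support hsupp).symm.imp
    IsLowerSet.compl IsUpperSet.compl) hc

lemma comp_congr (hf : IsTNFun f) (hFG : ∀ x, 0 ≤ x → F x = G x) : F ∘ f = G ∘ f :=
  funext fun x => hFG _ (hf.isTNToeplitz.nonneg x)

lemma comp_of_const_or_mul_or_step (hf : IsTNFun f) (hc : 0 ≤ c)
    (hF : (∀ x, 0 ≤ x → F x = c) ∨ (∀ x, 0 ≤ x → F x = c * x) ∨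
      (∀ x, 0 ≤ x → F x = if 0 < x then c else 0)) : IsTNFun (F ∘ f) := by
  rcases hF with hF | hF | hF <;> rw [hf.comp_congr hF]
  · simpa [Function.comp_def] using indicator_const (.inl isUpperSet_univ) hc
  · exact hf.const_mul hc
  · convert hf.indicator_support_const hc using 1
    ext x
    by_cases hx : f x = 0 <;> simp [hx, (hf.isTNToeplitz.nonneg x).lt_iff_ne']

lemma comp_of_eq_single_zero (hf : IsTNFun f) (hsupp : (Function.support f).Nontrivial)
    (hc : 0 ≤ c) (hF : ∀ x, 0 ≤ x → F x = if x = 0 then c else 0) : IsTNFun (F ∘ f) := by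
  rw [hf.comp_congr hF]
  convert hf.indicator_compl_support_const hsupp hc using 1
  ext x
  by_cases hx : f x = 0 <;> simp [hx]

end IsTNFun

lemma isTNFun_indicator_zero : IsTNFun (({0} : Set ℝ).indicator 1) :=
  ⟨measurable_one.indicator (measurableSet_singleton 0), IsTNToeplitz.indicator_zero⟩

lemma not_isTNFun_comp_indicator_zero {F : ℝ → ℝ} (h0 : F 0 ≠ 0) (h1 : F 1 = 0) :
    ¬ IsTNFun (F ∘ ({0} : Set ℝ).indicator 1) := by
  intro h
  have hmul : F 0 * F 0 ≤ 0 := by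
    simpa [h1] using h.isTNToeplitz.mul_le_mul (u := -1) (v := 0) (v' := 0) (w := 1)
      (by norm_num) (by norm_num) (by norm_num)
  exact h0 (mul_self_eq_zero.1 (le_antisymm hmul (mul_self_nonneg _)))

theorem stmt_15 (F : ℝ → ℝ) (hF0 : ∀ x : ℝ, 0 ≤ x → 0 ≤ F x)
    (hFne : ∃ x : ℝ, 0 ≤ x ∧ F x ≠ 0) :
    List.TFAE
      [∀ f : ℝ → ℝ, IsTNFun f → (∃ a b : ℝ, a ≠ b ∧ f a ≠ 0 ∧ f b ≠ 0) →
          IsTNFun (F ∘ f),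
       ∀ Λ : ℝ → ℝ, IsPolyaFrequencyFunction Λ → IsTNFun (F ∘ Λ),
       ∃ c : ℝ, 0 < c ∧
         ((∀ x : ℝ, 0 ≤ x → F x = c) ∨
          (∀ x : ℝ, 0 ≤ x → F x = c * x) ∨
          (∀ x : ℝ, 0 ≤ x → F x = if 0 < x then c else 0) ∨
          (∀ x : ℝ, 0 ≤ x → F x = if x = 0 then c else 0))] ∧
    ((∀ f : ℝ → ℝ, IsTNFun f → IsTNFun (F ∘ f)) ↔
      ∃ c : ℝ, 0 < c ∧
        ((∀ x : ℝ, 0 ≤ x → F x = c) ∨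
         (∀ x : ℝ, 0 ≤ x → F x = c * x) ∨
         (∀ x : ℝ, 0 ≤ x → F x = if 0 < x then c else 0))) := by
  have classify (h : ∀ Λ, IsPolyaFrequencyFunction Λ → IsTNFun (F ∘ Λ)) :=
    PreservesPolyaFrequency.eq_const_or_mul_or_step_or_single_zero
      (fun Λ hΛ => (h Λ hΛ).isTNToeplitz) hF0 hFne
  refine ⟨?_, fun h => ?_, fun ⟨c, hc, hF⟩ f hf => hf.comp_of_const_or_mul_or_step hc.le hF⟩
  · tfae_have 1 → 2 := fun h Λ hΛ => h Λ hΛ.isTNFun hΛ.2.2.1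
    tfae_have 2 → 3 := classify
    tfae_have 3 → 1 := by
      rintro ⟨c, hc, hF⟩ f hf ⟨a, b, hab, ha, hb⟩
      rcases or_assoc.2 (or_assoc.2 hF) with hF | hF
      · exact hf.comp_of_const_or_mul_or_step hc.le (or_assoc.1 hF)
      · exact hf.comp_of_eq_single_zero ⟨a, ha, b, hb, hab⟩ hc.le hF
    tfae_finish
  · obtain ⟨c, hc, hF⟩ := classify fun Λ hΛ => h Λ hΛ.isTNFun
    rcases or_assoc.2 (or_assoc.2 hF) with hF | hF
    · exact ⟨c, hc, or_assoc.1 hF⟩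
    · refine absurd (h _ isTNFun_indicator_zero) (not_isTNFun_comp_indicator_zero ?_ ?_)
      · simpa [hF] using hc.ne'
      · simp [hF]
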